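/- Let P_n(m) denote the probability that a random EC3 formula on n variables with m clauses (chosen independently and uniformly with replacement from the C(n,3) possible clauses) is satisfiable. Suppose there is a function r*(n) > 0 (a non-uniform threshold) such that for every ε > 0, P_n(⌊ρn⌋) → 1 as n → ∞ whenever ρ < (1−ε)·liminf r*(n) fails to exceed the threshold in the sense ρ ≤ (1−ε)r*(n) for all large n, and P_n(⌊ρn⌋) → 0 whenever ρ ≥ (1+ε)r*(n) for all large n. If for some fixed r > 0 we have liminf_{n→∞} P_n(⌊rn⌋) > 0, then for every fixed r' with 0 < r' < r, lim_{n→∞} P_n(⌊r'n⌋) = 1. -/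

import Mathlib

/-!
The probability `P(m)` of satisfiability of a random formula with `m` clauses decreases in `m`. If
it does not rise from a constant to nearly `1` as `m` decreases from `r n` to `r' n`, then `v ≤
P(m) (1 - P(m))` for a constant `v > 0` and all `m` between. By averaging, some such `m` has
one-step drop `P(m - 1) - P(m) = O(1/n)` and a drop of `O(L/n)` over the next `L` steps. For this
`m` two bounds on a variance contradict each other.

*Lower bound.* Expose the clauses of a random formula with `m` clauses one at a time, and let
`A(s)` be the variance of the conditional probability of satisfiability given the first `s`
clauses. Since this probability does not depend on the order of the clauses, the Cauchy–Schwarz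
inequality makes `A` log-convex in a suitable sense. Its last value `A(m) = P(m) (1 - P(m))` is at
least `v` and its last increment is at most the one-step drop, so `A(t) ≥ v (t/m)^k` for a
constant `k`: the variance decays only polynomially.

*Upper bound.* Averaging over a window of `L` further steps, the variance `A(t)` is at most of the
order of `∑_{s < t} E Q²` plus the drop over the window, where `Q` is the influence of one random
clause `c` on a random formula `y` with `s < t ≪ n` clauses, namely the probability that the
remaining clauses leave `y` satisfiable but not `y` together with `c`. There are three cases.

* If `c` lies in a small union of components of `y` which is satisfiable together with `c`, then
  adding `c` is no more harmful than pinning boundedly many variables that do not occur in the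
  other clauses of `y`. If a proportion `x` of all variables cannot take a certain value, a
  random clause falls among these variables, and is then violated, with probability about `x³`;
  iterating, pinning `κ` random variables with an effect `x` is matched by `κ` random clauses
  with an effect of about `x^(3^κ)`. But `κ` more clauses have an effect of at most `κ/L` on
  average over the window, so `Q` is small.
* The exploration of the component of `c` in `y` may be long. By symmetry, each clause of it
  belongs to the first `s` clauses with probability about `s/m ≪ 1`, so this is rare even given
  that `c` is influential.
* Otherwise the neighbourhood of `c` in `y` is small and unsatisfiable with `c`. A minimal
  unsatisfiable formula with `j + 1` clauses has at most `2 j + 1` variables, and the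
  probability that `j` clauses of `y` form such a configuration with `c` is `O(n⁻²)`.

With `b ≈ n^(1/K)` for a large constant `K`, `t ≈ n / b²` and `L ≈ n / b^(2k+1)`, the bounds read
`c b^(-2k) ≤ A(t) ≤ C b^(-2k-1)`, which is impossible for large `n`.
-/

open Filter Topology

/-- A clause of an EC3 (Positive 1-in-3 SAT) formula on `n` variables:
a 3-element subset of the variables. -/
def EC3Clause (n : ℕ) := {c : Finset (Fin n) // c.card = 3}

/-- An assignment satisfies a clause if exactly one of its variables is true. -/
def ClauseSat {n : ℕ} (σ : Fin n → Bool) (c : Finset (Fin n)) : Prop :=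
  (c.filter fun v => σ v = true).card = 1

/-- A formula (a length-`m` tuple of clauses, i.e. a multiset of clauses with
multiplicity recorded by indices) is satisfiable if some assignment satisfies
every clause. -/
def FormulaSatisfiable {n m : ℕ} (φ : Fin m → EC3Clause n) : Prop :=
  ∃ σ : Fin n → Bool, ∀ i : Fin m, ClauseSat σ (φ i).1

/-- The probability that a random EC3 formula on `n` variables with `m` clauses,
each chosen independently and uniformly with replacement among the `C(n,3)`
possible clauses, is satisfiable. -/
noncomputable def Psat (n m : ℕ) : ℝ :=
  (Nat.card {φ : Fin m → EC3Clause n // FormulaSatisfiable φ} : ℝ) /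
    (Nat.card (Fin m → EC3Clause n) : ℝ)

open scoped BigOperators

namespace RandomCSP

open Finset

/-! ### Elementary inequalities -/

section Inequalities

theorem choose_div_choose_eq_descFactorial_div (k n d : ℕ) :
    (k.choose d : ℝ) / n.choose d = k.descFactorial d / n.descFactorial d := by
  rw [Nat.descFactorial_eq_factorial_mul_choose, Nat.descFactorial_eq_factorial_mul_choose]
  push_cast
  rw [mul_div_mul_left _ _ (by positivity)]

theorem choose_div_choose_le_pow {k n : ℕ} (hk : k ≤ n) (d : ℕ) :
    (k.choose d : ℝ) / n.choose d ≤ ((k : ℝ) / n) ^ d := by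
  rw [choose_div_choose_eq_descFactorial_div]
  induction d with
  | zero => simp
  | succ d ih =>
    have hfactor : ((k - d : ℕ) : ℝ) / (n - d : ℕ) ≤ k / n := by
      rcases Nat.lt_or_ge d k with hd | hd
      · have hdn : (0 : ℝ) < (n - d : ℕ) := by exact_mod_cast Nat.sub_pos_of_lt (hd.trans_le hk)
        have hn : (0 : ℝ) < n := by exact_mod_cast (Nat.zero_le d).trans_lt (hd.trans_le hk)
        rw [div_le_div_iff₀ hdn hn, Nat.cast_sub hd.le, Nat.cast_sub (hd.le.trans hk)]
        have : (d : ℝ) * k ≤ d * n := by gcongr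
        linarith
      · rw [Nat.sub_eq_zero_of_le hd, Nat.cast_zero, zero_div]
        positivity
    rw [Nat.descFactorial_succ, Nat.descFactorial_succ, pow_succ']
    push_cast
    rw [mul_div_mul_comm]
    gcongr

theorem pow_sub_choose_two_div_le_choose_div_choose {k n d : ℕ} (hk : k ≤ n) (hd : d ≤ n) :
    ((k : ℝ) / n) ^ d - d.choose 2 / n ≤ (k.choose d : ℝ) / n.choose d := by
  have hx : (k : ℝ) / n ≤ 1 := div_le_one_of_le₀ (by exact_mod_cast hk) (by positivity)
  have hdesc : ∀ e : ℕ, ((k : ℝ) / n) ^ e - e.choose 2 / n ≤ k.descFactorial e / n ^ e := by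
    intro e
    induction e with
    | zero => simp
    | succ e ih =>
      set x : ℝ := k / n
      set u : ℝ := k.descFactorial e / n ^ e
      have hu1 : u ≤ 1 := by
        refine div_le_one_of_le₀ ?_ (by positivity)
        exact_mod_cast (Nat.descFactorial_le_pow k e).trans (Nat.pow_le_pow_left hk e)
      have hsucc : u * (x - e / n) ≤ k.descFactorial (e + 1) / n ^ (e + 1) := by
        rw [Nat.descFactorial_succ, pow_succ', Nat.cast_mul, mul_div_mul_comm, mul_comm, ← sub_div]
        gcongr
        rw [sub_le_iff_le_add]
        exact_mod_cast (by omega : k ≤ k - e + e)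
      have hx0 : 0 ≤ x := by positivity
      have hc : x * (e.choose 2 / n) ≤ e.choose 2 / n := mul_le_of_le_one_left (by positivity) hx
      have he : u * (e / n) ≤ e / n := mul_le_of_le_one_left (by positivity) hu1
      have hchoose : ((e + 1).choose 2 : ℝ) / n = e / n + e.choose 2 / n := by
        rw [Nat.choose_succ_succ' e 1, Nat.choose_one_right]; push_cast; ring
      calc x ^ (e + 1) - (e + 1).choose 2 / n
          ≤ (x ^ e - e.choose 2 / n) * x - e / n := by rw [hchoose, pow_succ]; linarith
        _ ≤ u * (x - e / n) := by
            have := mul_le_mul_of_nonneg_right ih hx0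
            linarith
        _ ≤ _ := hsucc
  refine (hdesc d).trans ?_
  rw [choose_div_choose_eq_descFactorial_div]
  gcongr
  · exact_mod_cast Nat.descFactorial_pos.2 hd
  · exact_mod_cast Nat.descFactorial_le_pow n d

theorem pow_sub_pow_le_mul_sub {x y : ℝ} (hy : 0 ≤ y) (hyx : y ≤ x) (hx : x ≤ 1) (N : ℕ) :
    x ^ N - y ^ N ≤ N * (x - y) := by
  have hmax : max |x| |y| ≤ 1 := by
    rw [abs_of_nonneg (hy.trans hyx), abs_of_nonneg hy]
    exact max_le hx (hyx.trans hx)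
  calc x ^ N - y ^ N ≤ |x - y| * N * max |x| |y| ^ (N - 1) :=
        (le_abs_self _).trans (abs_pow_sub_pow_le ..)
    _ ≤ |x - y| * N * 1 := by gcongr; exact pow_le_one₀ (by positivity) hmax
    _ = N * (x - y) := by rw [abs_of_nonneg (sub_nonneg.2 hyx)]; ring

theorem pow_sub_mul_le_pow {x X δ : ℝ} (hx0 : 0 ≤ x) (hx1 : x ≤ 1) (hX : 0 ≤ X) (hδ : 0 ≤ δ)
    (h : x - δ ≤ X) (N : ℕ) : x ^ N - N * δ ≤ X ^ N := by
  rcases le_total x X with hle | hle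
  · exact (sub_le_self _ (by positivity)).trans (by gcongr)
  · have := pow_sub_pow_le_mul_sub hX hle hx1 N
    nlinarith [mul_le_mul_of_nonneg_left (sub_le_comm.1 h) N.cast_nonneg]

theorem mul_pow_pow_anti {x κ : ℝ} (hx0 : 0 ≤ x) (hx1 : x ≤ 1) (hκ0 : 0 ≤ κ) (hκ1 : κ ≤ 1)
    {r k b : ℕ} (hb : 0 < b) (h : r ≤ k) : (κ ^ k * x) ^ b ^ k ≤ (κ ^ r * x) ^ b ^ r := by
  have hle : κ ^ k * x ≤ κ ^ r * x :=
    mul_le_mul_of_nonneg_right (pow_le_pow_of_le_one hκ0 hκ1 h) hx0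
  calc (κ ^ k * x) ^ b ^ k ≤ (κ ^ r * x) ^ b ^ k := by gcongr
    _ ≤ (κ ^ r * x) ^ b ^ r := pow_le_pow_of_le_one (by positivity)
        (mul_le_one₀ (pow_le_one₀ hκ0 hκ1) hx0 hx1) (Nat.pow_le_pow_right hb h)

theorem sum_sub_shift_le {f : ℕ → ℝ} {M : ℝ} (h0 : ∀ i, 0 ≤ f i) (h1 : ∀ i, f i ≤ M) (L k : ℕ) :
    ∑ l ∈ range L, (f l - f (l + k)) ≤ k * M := by
  have hsplit := (sum_range_add f L k).symm.trans (add_comm L k ▸ sum_range_add f k L)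
  have hhead : ∑ l ∈ range k, f l ≤ k * M := by
    simpa using sum_le_sum fun l (_ : l ∈ range k) => h1 l
  have htail : 0 ≤ ∑ l ∈ range k, f (L + l) := sum_nonneg fun l _ => h0 _
  simp only [sum_sub_distrib, add_comm _ k]
  linarith

end Inequalities

/-! ### Sequences with slowly decaying logarithmic slope -/

section PolynomialDecay

theorem div_add_one_pow_le_one_sub {k t : ℕ} (h : k ≤ t + 1) :
    ((t : ℝ) / (t + 1)) ^ k ≤ 1 - k / (2 * (t + 1)) := by
  set y : ℝ := 1 / (t + 1) with hy
  have hy0 : 0 ≤ y := by positivity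
  have hy1 : y ≤ 1 := by rw [hy, div_le_one (by positivity)]; linarith [t.cast_nonneg (α := ℝ)]
  have hky : (k : ℝ) * y ≤ 1 := by
    rw [hy, mul_one_div, div_le_one (by positivity)]; exact_mod_cast h
  have hky0 : 0 ≤ (k : ℝ) * y := by positivity
  have hbernoulli : 1 + (k : ℝ) * y ≤ (1 + y) ^ k := one_add_mul_le_pow (by linarith) k
  have hprod : (1 - y) ^ k * (1 + k * y) ≤ 1 :=
    calc (1 - y) ^ k * (1 + k * y) ≤ (1 - y) ^ k * (1 + y) ^ k := by
          gcongr
      _ = (1 - y ^ 2) ^ k := by rw [← mul_pow]; ring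
      _ ≤ 1 := pow_le_one₀ (by nlinarith) (by nlinarith)
  have hone : 1 ≤ (1 - k * y / 2) * (1 + k * y) := by nlinarith
  have e₁ : (t : ℝ) / (t + 1) = 1 - y := by rw [hy]; field_simp; ring
  have e₂ : (k : ℝ) / (2 * (t + 1)) = k * y / 2 := by rw [hy]; field_simp
  rw [e₁, e₂]
  exact le_of_mul_le_mul_right (hprod.trans hone) (by linarith)

theorem logSlope_le_of_logSlope_succ_le {A : ℕ → ℝ} {ρ : ℝ} {s : ℕ} (h2 : 0 < A (s + 2))
    (h1 : 0 ≤ A (s + 1))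
    (hconvex : ((s : ℝ) + 2) * A (s + 1) ^ 2 ≤ A (s + 2) * (A (s + 1) + ((s : ℝ) + 1) * A s))
    (hslope : ((s : ℝ) + 2) * (A (s + 2) - A (s + 1)) ≤ ρ * A (s + 2)) :
    ((s : ℝ) + 1) * (A (s + 1) - A s) ≤ ρ * A (s + 1) := by
  have hle : A (s + 2) * (A (s + 1) * (s + 2 - ρ)) ≤ A (s + 2) * (A (s + 1) + (s + 1) * A s) :=
    calc A (s + 2) * (A (s + 1) * (s + 2 - ρ)) = A (s + 1) * (A (s + 2) * (s + 2 - ρ)) := by ring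
      _ ≤ A (s + 1) * ((s + 2) * A (s + 1)) :=
          mul_le_mul_of_nonneg_left (by linarith) h1
      _ = (s + 2) * A (s + 1) ^ 2 := by ring
      _ ≤ _ := hconvex
  have := le_of_mul_le_mul_left hle h2
  linarith

theorem div_add_one_pow_mul_le {A : ℕ → ℝ} {ρ : ℝ} {k t : ℕ} (hA : 0 ≤ A (t + 1)) (hρ : 2 * ρ ≤ k)
    (hk : k ≤ t + 1) (hslope : ((t : ℝ) + 1) * (A (t + 1) - A t) ≤ ρ * A (t + 1)) :
    ((t : ℝ) / (t + 1)) ^ k * A (t + 1) ≤ A t := by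
  have hfactor : ((t : ℝ) / (t + 1)) ^ k ≤ 1 - ρ / (t + 1) := by
    refine (div_add_one_pow_le_one_sub hk).trans (sub_le_sub_left ?_ _)
    rw [div_le_div_iff₀ (by positivity) (by positivity)]
    nlinarith [t.cast_nonneg (α := ℝ)]
  refine (mul_le_mul_of_nonneg_right hfactor hA).trans ?_
  have : ρ / (t + 1) * A (t + 1) ≥ A (t + 1) - A t := by
    rw [div_mul_eq_mul_div, ge_iff_le, le_div_iff₀ (by positivity)]
    linarith
  linarith

/-- The bound `ρ` on the logarithmic slope `t (A t - A (t - 1)) / A t` propagates downwards. -/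
theorem mul_div_pow_le_of_logSlope_le {A : ℕ → ℝ} {m k : ℕ} {ρ : ℝ} (hm : 0 < A m)
    (hρ : 2 * ρ ≤ k) (hk : 1 ≤ k)
    (hconvex : ∀ s, s + 2 ≤ m →
      ((s : ℝ) + 2) * A (s + 1) ^ 2 ≤ A (s + 2) * (A (s + 1) + ((s : ℝ) + 1) * A s))
    (hslope : (m : ℝ) * (A m - A (m - 1)) ≤ ρ * A m) {t : ℕ} (ht : k ≤ t) (htm : t ≤ m) :
    A m * ((t : ℝ) / m) ^ k ≤ A t := by
  have hm0 : (0 : ℝ) < m := by exact_mod_cast (by omega : 0 < m)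
  suffices (t : ℝ) * (A t - A (t - 1)) ≤ ρ * A t ∧ 0 < A t ∧ A m * ((t : ℝ) / m) ^ k ≤ A t from
    this.2.2
  induction htm using Nat.decreasingInduction with
  | self => exact ⟨hslope, hm, by rw [div_self hm0.ne', one_pow, mul_one]⟩
  | of_succ t htm ih =>
    obtain ⟨hslope', hpos, hbound⟩ := ih (by omega)
    obtain ⟨s, rfl⟩ : ∃ s, t = s + 1 := ⟨t - 1, by omega⟩
    simp only [Nat.add_sub_cancel] at hslope' ⊢
    have hstep := div_add_one_pow_mul_le hpos.le hρ (by omega) (by exact_mod_cast hslope')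
    have hA : 0 < A (s + 1) := lt_of_lt_of_le (by positivity) hstep
    refine ⟨?_, hA, ?_⟩
    · have hslope₂ : ((s : ℝ) + 2) * (A (s + 2) - A (s + 1)) ≤ ρ * A (s + 2) := by
        push_cast at hslope'; linarith
      exact_mod_cast logSlope_le_of_logSlope_succ_le hpos hA.le (hconvex s (by omega)) hslope₂
    · set u : ℝ := ((s + 1 : ℕ) : ℝ)
      have hu : u + 1 ≠ 0 := by positivity
      have hcast : ((s + 1 + 1 : ℕ) : ℝ) = u + 1 := Nat.cast_succ _
      rw [hcast] at hbound
      calc A m * (u / m) ^ k = (u / (u + 1)) ^ k * (A m * ((u + 1) / m) ^ k) := by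
            rw [mul_left_comm, ← mul_pow]; congr 2; field_simp
        _ ≤ (u / (u + 1)) ^ k * A (s + 1 + 1) := by gcongr
        _ ≤ A (s + 1) := hstep

end PolynomialDecay

/-! ### Indicators and averages -/

section Averages

open Classical in
/-- The indicator of a proposition as a real number, used to write probabilities as averages. -/
noncomputable def iverson (P : Prop) : ℝ := if P then 1 else 0

theorem iverson_of_true {P : Prop} (h : P) : iverson P = 1 := if_pos h

theorem iverson_of_false {P : Prop} (h : ¬P) : iverson P = 0 := if_neg h

theorem iverson_nonneg (P : Prop) : 0 ≤ iverson P := by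
  unfold iverson; split_ifs <;> norm_num

theorem iverson_le_one (P : Prop) : iverson P ≤ 1 := by
  unfold iverson; split_ifs <;> norm_num

theorem iverson_sq (P : Prop) : iverson P ^ 2 = iverson P := by
  unfold iverson; split_ifs <;> norm_num

theorem iverson_mono {P Q : Prop} (h : P → Q) : iverson P ≤ iverson Q := by
  by_cases hP : P
  · rw [iverson_of_true hP, iverson_of_true (h hP)]
  · rw [iverson_of_false hP]; exact iverson_nonneg Q

theorem iverson_and (P Q : Prop) : iverson (P ∧ Q) = iverson P * iverson Q := by
  by_cases hP : P
  · simp only [hP, true_and, iverson_of_true trivial, one_mul]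
  · simp only [hP, false_and, iverson_of_false not_false, zero_mul]

theorem iverson_forall {ι : Type*} [Fintype ι] (P : ι → Prop) :
    iverson (∀ i, P i) = ∏ i, iverson (P i) := by
  by_cases h : ∀ i, P i
  · rw [iverson_of_true h, prod_eq_one fun i _ => iverson_of_true (h i)]
  · obtain ⟨i, hi⟩ := not_forall.1 h
    rw [iverson_of_false h, prod_eq_zero (mem_univ i) (iverson_of_false hi)]

variable {α ι κ : Type*} [Fintype α]

theorem sum_iverson (P : α → Prop) [DecidablePred P] :
    ∑ a, iverson (P a) = #{a | P a} := by
  rw [card_filter, Nat.cast_sum]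
  refine sum_congr rfl fun a _ => ?_
  by_cases h : P a <;> simp [iverson, h]

theorem expect_iverson (P : α → Prop) [DecidablePred P] :
    𝔼 a, iverson (P a) = #{a | P a} / (Fintype.card α : ℝ) := by
  rw [Fintype.expect_eq_sum_div_card, sum_iverson]

theorem expect_insertNth {s : ℕ} (i : Fin (s + 1)) (φ : (Fin (s + 1) → α) → ℝ) :
    𝔼 x, φ x = 𝔼 y : Fin s → α, 𝔼 c : α, φ (i.insertNth c y) := by
  rw [expect_comm, ← expect_product' (f := fun (c : α) (y : Fin s → α) => φ (i.insertNth c y)),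
    univ_product_univ]
  exact (Fintype.expect_equiv (Fin.insertNthEquiv (fun _ => α) i) _ _ fun _ => rfl).symm

theorem expect_sumElim [Fintype ι] [Fintype κ] [DecidableEq ι] [DecidableEq κ]
    (φ : (ι ⊕ κ → α) → ℝ) :
    𝔼 x, φ x = 𝔼 y : ι → α, 𝔼 z : κ → α, φ (Sum.elim y z) := by
  rw [← expect_product' (f := fun y z => φ (Sum.elim y z)), univ_product_univ]
  exact (Fintype.expect_equiv (Equiv.sumArrowEquivProdArrow _ _ _).symm _ _ fun _ => rfl).symm

theorem expect_prod_apply [Fintype ι] [DecidableEq ι] (f : ι → α → ℝ) :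
    𝔼 x : ι → α, ∏ i, f i (x i) = ∏ i, 𝔼 a, f i a := by
  simp only [Fintype.expect_eq_sum_div_card, Finset.prod_div_distrib, prod_const, card_univ,
    Fintype.card_fun, Nat.cast_pow]
  rw [prod_univ_sum, Fintype.piFinset_univ]

theorem expect_iverson_forall_mem {ι α : Type*} [Fintype ι] [DecidableEq ι] [Fintype α]
    [Nonempty α] (W : Finset ι) (P : α → Prop) :
    𝔼 x : ι → α, iverson (∀ i ∈ W, P (x i)) = (𝔼 a, iverson (P a)) ^ #W := by
  simp only [iverson_forall (fun i => i ∈ W → P _)]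
  rw [expect_prod_apply fun i a => iverson (i ∈ W → P a), ← prod_const]
  refine (prod_subset (subset_univ W) fun i _ hi => ?_).symm.trans (prod_congr rfl fun i hi => ?_)
  · simp [hi, iverson_of_true]
  · simp [hi]

theorem expect_mul_comp_embedding_eq [Fintype ι] [DecidableEq ι] {r : ℕ} {F : (ι → α) → ℝ}
    (hF : ∀ (π : Equiv.Perm ι) x, F (x ∘ π) = F x) (φ : (Fin r → α) → ℝ) (e e' : Fin r ↪ ι) :
    𝔼 x, F x * φ (x ∘ e) = 𝔼 x, F x * φ (x ∘ e') := by
  obtain ⟨π, hπ⟩ : ∃ π : Equiv.Perm ι, ∀ i, π (e i) = e' i := by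
    have := Equiv.Perm.isMultiplyPretransitive ι r
    obtain ⟨π, hπ⟩ := MulAction.exists_smul_eq (Equiv.Perm ι) e e'
    exact ⟨π, fun i => by rw [← hπ]; rfl⟩
  refine (Fintype.expect_equiv (π.symm.arrowCongr (Equiv.refl α)) _ _ fun x => ?_).symm
  have hcomp : π.symm.arrowCongr (Equiv.refl α) x = x ∘ π := rfl
  have hsub : (x ∘ π) ∘ e = x ∘ e' := by funext i; simp [hπ]
  rw [hcomp, hF, hsub]

theorem expect_pow_le_expect_pow {β : Type*} {s : Finset β} (hs : s.Nonempty) {f : β → ℝ}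
    (hf : ∀ b ∈ s, 0 ≤ f b) (N : ℕ) : (𝔼 b ∈ s, f b) ^ N ≤ 𝔼 b ∈ s, f b ^ N := by
  have hcard : (#s : ℝ) ≠ 0 := by exact_mod_cast hs.card_ne_zero
  have := Real.pow_arith_mean_le_arith_mean_pow s (fun _ => (#s : ℝ)⁻¹) f
    (fun _ _ => by positivity) (by simp [hcard]) hf N
  simpa only [expect_eq_sum_div_card, div_eq_inv_mul, ← mul_sum] using this

theorem card_div_card_mul_le_expect {f : α → ℝ} {x : ℝ} {U : Finset α} (hf : ∀ a, 0 ≤ f a)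
    (hx : ∀ a ∈ U, x ≤ f a) : #U / (Fintype.card α : ℝ) * x ≤ 𝔼 a, f a := by
  rw [Fintype.expect_eq_sum_div_card, div_mul_eq_mul_div, ← nsmul_eq_mul]
  gcongr
  exact (card_nsmul_le_sum U f x hx).trans
    (sum_le_sum_of_subset_of_nonneg (subset_univ U) fun a _ _ => hf a)

end Averages

/-! ### Random constraint satisfaction problems -/

section SatProb

variable {Ω C ι κ : Type*} (sat : C → Set Ω)

/-- The set of assignments satisfying every constraint of the formula `x`, where the constraint `c`
is satisfied by the assignments in `sat c`. -/
def solutions (x : ι → C) : Set Ω := {σ | ∀ i, σ ∈ sat (x i)}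

theorem solutions_of_isEmpty [IsEmpty ι] (x : ι → C) : solutions sat x = Set.univ :=
  Set.eq_univ_of_forall fun _ => isEmptyElim

theorem solutions_insertNth {s : ℕ} (i : Fin (s + 1)) (c : C) (y : Fin s → C) :
    solutions sat (i.insertNth c y : Fin (s + 1) → C) = solutions sat y ∩ sat c := by
  ext σ
  simp only [solutions, Set.mem_ofPred_eq, Set.mem_inter_iff, Fin.forall_iff_succAbove i,
    Fin.insertNth_apply_same, Fin.insertNth_apply_succAbove]
  exact and_comm

theorem solutions_removeNth {s : ℕ} (j : Fin (s + 1)) (x : Fin (s + 1) → C) :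
    solutions sat (j.removeNth x) = {σ | ∀ k ≠ j, σ ∈ sat (x k)} := by
  ext σ
  simp [solutions, Fin.forall_iff_succAbove (P := fun k => k ≠ j → σ ∈ sat (x k)) j,
    Fin.removeNth, Fin.succAbove_ne]

theorem solutions_sumElim (y : ι → C) (z : κ → C) :
    solutions sat (Sum.elim y z) = solutions sat y ∩ solutions sat z := by
  ext σ; simp [solutions]

theorem solutions_comp_equiv (e : κ ≃ ι) (x : ι → C) : solutions sat (x ∘ e) = solutions sat x :=
  Set.ext fun _ => e.forall_congr_right (q := fun i => _ ∈ sat (x i))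

variable [Fintype C]

/-- The probability that some assignment in `S` satisfies `j` independent uniform constraints. -/
noncomputable def satProb (j : ℕ) (S : Set Ω) : ℝ :=
  𝔼 x : Fin j → C, iverson (S ∩ solutions sat x).Nonempty

theorem satProb_zero (S : Set Ω) : satProb sat 0 S = iverson S.Nonempty := by
  simp [satProb, solutions_of_isEmpty]

theorem satProb_succ (j : ℕ) (S : Set Ω) :
    satProb sat (j + 1) S = 𝔼 c, satProb sat j (S ∩ sat c) := by
  simp only [satProb]
  rw [expect_insertNth 0, expect_comm]
  simp only [solutions_insertNth, Set.inter_assoc, Set.inter_comm]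

theorem expect_satProb_inter_solutions (s j : ℕ) (S : Set Ω) :
    𝔼 x : Fin s → C, satProb sat j (S ∩ solutions sat x) = satProb sat (s + j) S := by
  induction s generalizing j with
  | zero => simp [solutions_of_isEmpty]
  | succ s ih =>
    rw [expect_insertNth 0, add_right_comm, add_assoc, ← ih (j + 1)]
    simp only [satProb_succ, solutions_insertNth, Set.inter_assoc]

theorem satProb_nonneg (j : ℕ) (S : Set Ω) : 0 ≤ satProb sat j S :=
  expect_nonneg fun _ _ => iverson_nonneg _

theorem satProb_mono (j : ℕ) {S T : Set Ω} (h : S ⊆ T) : satProb sat j S ≤ satProb sat j T :=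
  expect_le_expect fun _ _ => iverson_mono fun hne => hne.mono (Set.inter_subset_inter_left _ h)

theorem satProb_preimage (j : ℕ) {e : Ω → Ω} (he : e.Surjective) (ρ : C ≃ C)
    (hρ : ∀ c, sat (ρ c) = e ⁻¹' sat c) (S : Set Ω) :
    satProb sat j (e ⁻¹' S) = satProb sat j S := by
  refine (Fintype.expect_equiv (Equiv.piCongrRight fun _ => ρ) _ _ fun x => ?_).symm
  have hsol : solutions sat (fun i => ρ (x i)) = e ⁻¹' solutions sat x := by
    ext σ; simp [solutions, hρ]
  change _ = iverson (e ⁻¹' S ∩ solutions sat fun i => ρ (x i)).Nonempty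
  rw [hsol, ← Set.preimage_inter, he.nonempty_preimage]

theorem satProb_empty (j : ℕ) : satProb sat j ∅ = 0 := by
  simp [satProb, iverson_of_false]

variable [Nonempty C]

theorem satProb_antitone (S : Set Ω) : Antitone fun j => satProb sat j S :=
  antitone_nat_of_succ_le fun j => by
    rw [satProb_succ]
    exact expect_le univ_nonempty fun c _ => satProb_mono sat j Set.inter_subset_left

theorem satProb_le_one (j : ℕ) (S : Set Ω) : satProb sat j S ≤ 1 :=
  expect_le univ_nonempty fun _ _ => iverson_le_one _

end SatProb

/-! ### Second moments of exposure martingales -/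

section SecondMoment

variable {Ω C : Type*} [Fintype C] (sat : C → Set Ω) {g : ℕ → Set Ω → ℝ}

/-- The second moment at time `s` of the process `g`, whose value after exposing constraints with
set of solutions `S` is `g s S`. -/
noncomputable def secondMoment (g : ℕ → Set Ω → ℝ) (s : ℕ) : ℝ :=
  𝔼 x : Fin s → C, g s (solutions sat x) ^ 2

/-- The martingale property of `g` at time `s`: the value `g s` is the average of `g (s + 1)` over
the next constraint to be exposed. -/
def IsMartingaleAt (g : ℕ → Set Ω → ℝ) (s : ℕ) : Prop :=
  ∀ S, g s S = 𝔼 c, g (s + 1) (S ∩ sat c)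

variable {sat}

theorem expect_mul_removeNth {s : ℕ} (h : IsMartingaleAt sat g s) (i : Fin (s + 1)) :
    𝔼 x : Fin (s + 1) → C, g (s + 1) (solutions sat x) * g s (solutions sat (i.removeNth x))
      = secondMoment sat g s := by
  rw [expect_insertNth i, secondMoment]
  refine expect_congr rfl fun y _ => ?_
  simp only [Fin.removeNth_insertNth, solutions_insertNth]
  rw [← expect_mul, ← h, sq]

theorem expect_removeNth_sq [Nonempty C] {s : ℕ} (i : Fin (s + 1)) :
    𝔼 x : Fin (s + 1) → C, g s (solutions sat (i.removeNth x)) ^ 2 = secondMoment sat g s := by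
  simp only [secondMoment, expect_insertNth i, Fin.removeNth_insertNth, Fintype.expect_const]

/-- Given the constraints other than `i` and `j`, the two factors are independent with equal
means. -/
theorem expect_removeNth_mul_removeNth {s : ℕ} (h : IsMartingaleAt sat g s) {i j : Fin (s + 2)}
    (hij : i ≠ j) :
    𝔼 x : Fin (s + 2) → C,
      g (s + 1) (solutions sat (i.removeNth x)) * g (s + 1) (solutions sat (j.removeNth x))
      = secondMoment sat g s := by
  obtain ⟨k, rfl⟩ := Fin.exists_succAbove_eq hij.symm
  have hremove (c d : C) (z : Fin s → C) : solutions sat ((i.succAbove k).removeNth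
      (i.insertNth c (k.insertNth d z : Fin (s + 1) → C) : Fin (s + 2) → C))
      = solutions sat z ∩ sat c := by
    rw [solutions_removeNth]
    ext σ
    simp only [Set.mem_ofPred_eq, Set.mem_inter_iff, solutions]
    rw [Fin.forall_iff_succAbove i, Fin.forall_iff_succAbove k]
    simp [hij, Fin.succAbove_ne, and_comm]
  have hmean (S : Set Ω) : 𝔼 c, g (s + 1) (S ∩ sat c) = g s S := (h S).symm
  rw [expect_insertNth i, expect_insertNth k, secondMoment]
  refine expect_congr rfl fun z _ => ?_
  simp only [hremove, Fin.removeNth_insertNth, solutions_insertNth]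
  simp_rw [← mul_expect, hmean, ← expect_mul, hmean]
  rw [sq]

theorem expect_sum_removeNth_sq [Nonempty C] {s : ℕ} (h : IsMartingaleAt sat g s) :
    𝔼 x : Fin (s + 2) → C, (∑ i : Fin (s + 2), g (s + 1) (solutions sat (i.removeNth x))) ^ 2
      = (s + 2) * (secondMoment sat g (s + 1) + (s + 1) * secondMoment sat g s) := by
  have hrow (i : Fin (s + 2)) : 𝔼 x : Fin (s + 2) → C, ∑ j : Fin (s + 2),
      g (s + 1) (solutions sat (i.removeNth x)) * g (s + 1) (solutions sat (j.removeNth x))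
      = secondMoment sat g (s + 1) + (s + 1) * secondMoment sat g s := by
    rw [expect_sum_comm, Fin.sum_univ_succAbove _ i,
      sum_congr rfl fun j _ => expect_removeNth_mul_removeNth h (Fin.succAbove_ne i j).symm]
    simp only [← sq, expect_removeNth_sq, sum_const, card_univ, Fintype.card_fin, nsmul_eq_mul,
      Nat.cast_add, Nat.cast_one]
  simp_rw [sq, sum_mul_sum]
  rw [expect_sum_comm]
  simp only [hrow, sum_const, card_univ, Fintype.card_fin, nsmul_eq_mul, Nat.cast_add,
    Nat.cast_ofNat]

/-- The Cauchy–Schwarz inequality for `g (s + 2)` and the sum of its conditional expectations given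
all constraints but one. -/
theorem secondMoment_logConvex [Nonempty C] {s : ℕ} (h : IsMartingaleAt sat g s)
    (h' : IsMartingaleAt sat g (s + 1)) :
    ((s : ℝ) + 2) * secondMoment sat g (s + 1) ^ 2
      ≤ secondMoment sat g (s + 2)
        * (secondMoment sat g (s + 1) + ((s : ℝ) + 1) * secondMoment sat g s) := by
  have hcross : 𝔼 x : Fin (s + 2) → C,
      g (s + 2) (solutions sat x) * ∑ i : Fin (s + 2), g (s + 1) (solutions sat (i.removeNth x))
      = (s + 2) * secondMoment sat g (s + 1) := by
    simp_rw [mul_sum]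
    rw [expect_sum_comm]
    simp only [expect_mul_removeNth h', sum_const, card_univ, Fintype.card_fin, nsmul_eq_mul,
      Nat.cast_add, Nat.cast_ofNat]
  have hcauchy := expect_mul_sq_le_sq_mul_sq univ
    (fun x : Fin (s + 2) → C => g (s + 2) (solutions sat x))
    fun x => ∑ i : Fin (s + 2), g (s + 1) (solutions sat (i.removeNth x))
  rw [hcross, expect_sum_removeNth_sq h] at hcauchy
  have hs : (0 : ℝ) < s + 2 := by positivity
  refine le_of_mul_le_mul_left ?_ hs
  calc ((s : ℝ) + 2) * ((s + 2) * secondMoment sat g (s + 1) ^ 2)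
      = ((s + 2) * secondMoment sat g (s + 1)) ^ 2 := by ring
    _ ≤ secondMoment sat g (s + 2) * ((s + 2)
          * (secondMoment sat g (s + 1) + (s + 1) * secondMoment sat g s)) := hcauchy
    _ = _ := by ring

theorem expect_sq_sub_sq_expect_le {α : Type*} [Fintype α] [Nonempty α] (w : α → ℝ) (b : ℝ) :
    𝔼 a, w a ^ 2 - (𝔼 a, w a) ^ 2 ≤ 𝔼 a, (b - w a) ^ 2 := by
  have hexpand : 𝔼 a, (b - w a) ^ 2 = b ^ 2 - 2 * b * 𝔼 a, w a + 𝔼 a, w a ^ 2 := by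
    rw [mul_expect, ← Fintype.expect_const (ι := α) (b ^ 2), ← expect_sub_distrib,
      ← expect_add_distrib]
    exact expect_congr rfl fun a _ => by ring
  linarith [sq_nonneg (b - 𝔼 a, w a)]

/-- The increment of the second moments is a mean conditional variance. -/
theorem secondMoment_succ_sub_le [Nonempty C] {s : ℕ} (h : IsMartingaleAt sat g s)
    (b : Set Ω → ℝ) :
    secondMoment sat g (s + 1) - secondMoment sat g s ≤ 𝔼 y : Fin s → C, 𝔼 c,
      (b (solutions sat y) - g (s + 1) (solutions sat y ∩ sat c)) ^ 2 := by
  rw [secondMoment, secondMoment, expect_insertNth 0, ← expect_sub_distrib]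
  refine expect_le_expect fun y _ => ?_
  simp only [solutions_insertNth]
  rw [h]
  exact expect_sq_sub_sq_expect_le _ _

end SecondMoment

/-! ### Influence of a random constraint -/

section Influence

variable {Ω C : Type*} [Fintype C] (sat : C → Set Ω)

/-- The probability that `j` independent uniform constraints are satisfied by an assignment in `S`
but not by one in `S` satisfying `c` as well. -/
noncomputable def influence (j : ℕ) (S : Set Ω) (c : C) : ℝ :=
  satProb sat j S - satProb sat j (S ∩ sat c)

/-- The average of `satProb` over the window `[j, j + L)`. -/
noncomputable def windowProb (L j : ℕ) (S : Set Ω) : ℝ := 𝔼 l ∈ range L, satProb sat (j + l) S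

/-- The average of `influence` over the window `[j, j + L)`. -/
noncomputable def windowInfluence (L j : ℕ) (S : Set Ω) (c : C) : ℝ :=
  𝔼 l ∈ range L, influence sat (j + l) S c

theorem windowInfluence_eq_sub (L j : ℕ) (S : Set Ω) (c : C) :
    windowInfluence sat L j S c = windowProb sat L j S - windowProb sat L j (S ∩ sat c) :=
  expect_sub_distrib _ _ _

theorem influence_eq_expect (j : ℕ) (S : Set Ω) (c : C) :
    influence sat j S c = 𝔼 x : Fin j → C, influence sat 0 (S ∩ solutions sat x) c := by
  simp only [influence, expect_sub_distrib, Set.inter_right_comm S _ (sat c),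
    expect_satProb_inter_solutions, add_zero]

theorem influence_nonneg (j : ℕ) (S : Set Ω) (c : C) : 0 ≤ influence sat j S c :=
  sub_nonneg.2 (satProb_mono sat j Set.inter_subset_left)

theorem windowInfluence_nonneg (L j : ℕ) (S : Set Ω) (c : C) : 0 ≤ windowInfluence sat L j S c :=
  expect_nonneg fun _ _ => influence_nonneg ..

theorem windowInfluence_empty (L j : ℕ) (c : C) : windowInfluence sat L j ∅ c = 0 := by
  simp [windowInfluence, influence]

theorem windowProb_one (j : ℕ) (S : Set Ω) : windowProb sat 1 j S = satProb sat j S := by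
  simp [windowProb]

theorem windowProb_succ (L j : ℕ) (S : Set Ω) :
    windowProb sat L (j + 1) S = 𝔼 c, windowProb sat L j (S ∩ sat c) := by
  simp only [windowProb]
  rw [expect_comm]
  simp only [add_right_comm j 1, satProb_succ]

theorem expect_windowProb_solutions (L s j : ℕ) :
    𝔼 x : Fin s → C, windowProb sat L j (solutions sat x) = windowProb sat L (s + j) Set.univ := by
  simp only [windowProb]
  rw [expect_comm]
  simp only [add_assoc, ← expect_satProb_inter_solutions, Set.univ_inter]

theorem expect_windowInfluence_mul (L j : ℕ) {s : ℕ} (X : (Fin s → C) → C → ℝ) :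
    𝔼 y : Fin s → C, 𝔼 c, windowInfluence sat L j (solutions sat y) c * X y c
      = 𝔼 l ∈ range L, 𝔼 y : Fin s → C, 𝔼 c, influence sat (j + l) (solutions sat y) c * X y c := by
  simp_rw [windowInfluence, expect_mul]
  rw [expect_comm (range L) univ fun l y => 𝔼 c, influence sat (j + l) (solutions sat y) c * X y c]
  exact expect_congr rfl fun y _ => expect_comm ..

variable [Nonempty C]

theorem influence_le_one (j : ℕ) (S : Set Ω) (c : C) : influence sat j S c ≤ 1 := by
  have := satProb_nonneg sat j (S ∩ sat c)
  have := satProb_le_one sat j S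
  unfold influence; linarith

theorem windowInfluence_le_one (L j : ℕ) (S : Set Ω) (c : C) :
    windowInfluence sat L j S c ≤ 1 := by
  rcases L.eq_zero_or_pos with rfl | hL
  · simp [windowInfluence]
  · exact expect_le (by simpa using hL.ne') fun _ _ => influence_le_one ..

theorem windowInfluence_pow_le {κ δ : ℝ} {N r L : ℕ} {S S₀ : Set Ω} {c : C} (hκ : 0 ≤ κ)
    (hL : 0 < L) (h : ∀ j, (κ * influence sat j S c) ^ N
      ≤ satProb sat j S₀ - satProb sat (j + r) S₀ + δ) (j : ℕ) :
    (κ * windowInfluence sat L j S c) ^ N ≤ r / L + δ := by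
  have hLne : (range L).Nonempty := by simpa using hL.ne'
  calc (κ * windowInfluence sat L j S c) ^ N
      ≤ 𝔼 l ∈ range L, (κ * influence sat (j + l) S c) ^ N := by
        rw [windowInfluence, mul_expect]
        exact expect_pow_le_expect_pow hLne (fun l _ => mul_nonneg hκ (influence_nonneg ..)) N
    _ ≤ 𝔼 l ∈ range L, (satProb sat (j + l) S₀ - satProb sat (j + l + r) S₀ + δ) :=
        expect_le_expect fun l _ => h _
    _ = (∑ l ∈ range L, (satProb sat (j + l) S₀ - satProb sat (j + (l + r)) S₀)) / L + δ := by
        rw [expect_add_distrib, expect_const hLne, expect_eq_sum_div_card, card_range]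
        simp only [add_assoc]
    _ ≤ r / L + δ := by
        gcongr
        simpa using sum_sub_shift_le (f := fun l => satProb sat (j + l) S₀)
          (fun _ => satProb_nonneg ..) (fun _ => satProb_le_one ..) L r

theorem windowProb_le_satProb {L : ℕ} (hL : 0 < L) (j : ℕ) (S : Set Ω) :
    windowProb sat L j S ≤ satProb sat j S :=
  expect_le (by simpa using hL.ne') fun l _ => satProb_antitone sat S (Nat.le_add_right j l)

theorem satProb_le_windowProb {L : ℕ} (hL : 0 < L) (j : ℕ) (S : Set Ω) :
    satProb sat (j + L) S ≤ windowProb sat L j S :=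
  le_expect (by simpa using hL.ne') fun l hl =>
    satProb_antitone sat S (Nat.add_le_add_left (mem_range.1 hl).le j)

theorem expect_influence_solutions (s j : ℕ) :
    𝔼 y : Fin s → C, 𝔼 c, influence sat j (solutions sat y) c
      = satProb sat (s + j) Set.univ - satProb sat (s + j + 1) Set.univ := by
  simp only [influence, expect_sub_distrib, Fintype.expect_const, ← satProb_succ]
  simp only [add_assoc, ← expect_satProb_inter_solutions, Set.univ_inter]

theorem expect_satProb_drop_le (L N : ℕ) (S : Set Ω) :
    𝔼 l ∈ range L, (satProb sat (N + l) S - satProb sat (N + l + 1) S) ≤ 1 / L := by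
  rw [expect_eq_sum_div_card, card_range]
  gcongr
  simpa [add_assoc] using sum_sub_shift_le (f := fun l => satProb sat (N + l) S)
    (fun l => satProb_nonneg ..) (fun l => satProb_le_one ..) L 1

theorem expect_windowInfluence_solutions_le (L j : ℕ) {s : ℕ} :
    𝔼 y : Fin s → C, 𝔼 c, windowInfluence sat L j (solutions sat y) c ≤ 1 / L := by
  have h := expect_windowInfluence_mul sat L j fun (_ : Fin s → C) _ => 1
  simp only [mul_one] at h
  rw [h]
  simp only [expect_influence_solutions, ← add_assoc]
  exact expect_satProb_drop_le ..

end Influence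

/-! ### The variance of the exposure martingale -/

section Exposure

variable {Ω C : Type*} [Fintype C] (sat : C → Set Ω)

/-- The centred exposure martingale of satisfiability of a random formula, averaged over formulas
with `m, …, m + L - 1` constraints; meaningful up to time `m`. -/
noncomputable def exposure (L m s : ℕ) (S : Set Ω) : ℝ :=
  windowProb sat L (m - s) S - windowProb sat L m Set.univ

theorem secondMoment_exposure_zero (L m : ℕ) : secondMoment sat (exposure sat L m) 0 = 0 := by
  simp [secondMoment, exposure, solutions_of_isEmpty]

variable [Nonempty C]

theorem isMartingaleAt_exposure (L : ℕ) {m s : ℕ} (h : s < m) :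
    IsMartingaleAt sat (exposure sat L m) s := fun S => by
  obtain ⟨j, rfl⟩ := Nat.exists_eq_add_of_lt h
  simp only [exposure, expect_sub_distrib, Fintype.expect_const, ← windowProb_succ]
  congr 2
  omega

theorem secondMoment_exposure_self (m : ℕ) :
    secondMoment sat (exposure sat 1 m) m
      = satProb sat m Set.univ * (1 - satProb sat m Set.univ) := by
  set P := satProb sat m Set.univ
  have hsq (x : Fin m → C) : exposure sat 1 m m (solutions sat x) ^ 2
      = (1 - 2 * P) * satProb sat 0 (Set.univ ∩ solutions sat x) + P ^ 2 := by
    rw [exposure, Nat.sub_self, windowProb_one, windowProb_one, Set.univ_inter, satProb_zero]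
    linear_combination iverson_sq (solutions sat x).Nonempty
  rw [secondMoment, expect_congr rfl fun x _ => hsq x, expect_add_distrib, ← mul_expect,
    Fintype.expect_const, expect_satProb_inter_solutions, add_zero]
  ring

theorem secondMoment_exposure_succ_sub_le (s : ℕ) :
    secondMoment sat (exposure sat 1 (s + 1)) (s + 1) - secondMoment sat (exposure sat 1 (s + 1)) s
      ≤ satProb sat s Set.univ - satProb sat (s + 1) Set.univ := by
  refine (secondMoment_succ_sub_le (isMartingaleAt_exposure sat 1 s.lt_succ_self)
    fun S => satProb sat 0 S - windowProb sat 1 (s + 1) Set.univ).trans ?_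
  refine le_of_le_of_eq ?_ (expect_influence_solutions sat s 0)
  refine expect_le_expect fun y _ => expect_le_expect fun c _ => ?_
  rw [exposure, Nat.sub_self, windowProb_one sat 0, sub_sub_sub_cancel_right, ← influence]
  exact pow_le_of_le_one (influence_nonneg ..) (influence_le_one ..) two_ne_zero

theorem mul_div_pow_le_secondMoment_exposure {m k t : ℕ} {v : ℝ} (hv : 0 < v)
    (hvm : v ≤ satProb sat m Set.univ * (1 - satProb sat m Set.univ)) (hk1 : 1 ≤ k)
    (hk : 2 * (m * (satProb sat (m - 1) Set.univ - satProb sat m Set.univ) / v) ≤ k)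
    (hkt : k ≤ t) (htm : t ≤ m) :
    v * ((t : ℝ) / m) ^ k ≤ secondMoment sat (exposure sat 1 m) t := by
  obtain ⟨s, rfl⟩ : ∃ s, m = s + 1 := ⟨m - 1, by omega⟩
  simp only [Nat.add_sub_cancel] at hk
  set A := secondMoment sat (exposure sat 1 (s + 1))
  set d := satProb sat s Set.univ - satProb sat (s + 1) Set.univ
  have hA : v ≤ A (s + 1) := by rwa [← secondMoment_exposure_self] at hvm
  have hd : 0 ≤ d := sub_nonneg.2 (satProb_antitone sat Set.univ s.le_succ)
  have hslope : ((s + 1 : ℕ) : ℝ) * (A (s + 1) - A s) ≤ (s + 1 : ℕ) * d / v * A (s + 1) :=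
    calc ((s + 1 : ℕ) : ℝ) * (A (s + 1) - A s) ≤ (s + 1 : ℕ) * d := by
          gcongr; exact secondMoment_exposure_succ_sub_le sat s
      _ = (s + 1 : ℕ) * d / v * v := by field_simp
      _ ≤ _ := by gcongr
  calc v * ((t : ℝ) / (s + 1 : ℕ)) ^ k ≤ A (s + 1) * ((t : ℝ) / (s + 1 : ℕ)) ^ k := by gcongr
    _ ≤ A t := mul_div_pow_le_of_logSlope_le (hv.trans_le hA) hk hk1 (fun i hi =>
        secondMoment_logConvex (isMartingaleAt_exposure sat 1 (by omega))
          (isMartingaleAt_exposure sat 1 (by omega))) hslope hkt htm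

theorem secondMoment_exposure_le_sum (L : ℕ) {m t : ℕ} (htm : t ≤ m) :
    secondMoment sat (exposure sat L m) t ≤ ∑ s ∈ range t, 𝔼 y : Fin s → C, 𝔼 c,
      windowInfluence sat L (m - (s + 1)) (solutions sat y) c ^ 2 := by
  induction t with
  | zero => rw [secondMoment_exposure_zero, sum_range_zero]
  | succ t ih =>
    have hstep := secondMoment_succ_sub_le (isMartingaleAt_exposure sat L (m := m) htm)
      fun S => windowProb sat L (m - (t + 1)) S - windowProb sat L m Set.univ
    simp only [exposure, sub_sub_sub_cancel_right, ← windowInfluence_eq_sub] at hstep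
    rw [sum_range_succ]
    exact (sub_le_iff_le_add.1 hstep).trans (by linarith [ih (by omega)])

theorem secondMoment_exposure_one_le {m t L : ℕ} (htm : t ≤ m) (hL : 0 < L) :
    secondMoment sat (exposure sat 1 m) t ≤ 2 * secondMoment sat (exposure sat L m) t
      + 4 * (satProb sat m Set.univ - satProb sat (m + L) Set.univ) := by
  set U : ℕ → Set Ω → ℝ := fun j S => satProb sat j S - windowProb sat L j S
  have hU0 (j : ℕ) (S : Set Ω) : 0 ≤ U j S := sub_nonneg.2 (windowProb_le_satProb sat hL j S)
  have hU1 (j : ℕ) (S : Set Ω) : U j S ≤ 1 := by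
    have := (satProb_nonneg sat (j + L) S).trans (satProb_le_windowProb sat hL j S)
    linarith [satProb_le_one sat j S]
  have hmean : 𝔼 x : Fin t → C, U (m - t) (solutions sat x) = U m Set.univ := by
    simp only [U, expect_sub_distrib, ← windowProb_one, expect_windowProb_solutions,
      Nat.add_sub_cancel' htm]
  have hpointwise (x : Fin t → C) : exposure sat 1 m t (solutions sat x) ^ 2
      ≤ 2 * exposure sat L m t (solutions sat x) ^ 2
        + 2 * (U (m - t) (solutions sat x) + U m Set.univ) := by
    have hsplit : exposure sat 1 m t (solutions sat x) = exposure sat L m t (solutions sat x)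
        + (U (m - t) (solutions sat x) - U m Set.univ) := by
      simp only [exposure, windowProb_one, U]; ring
    have hdiff : (U (m - t) (solutions sat x) - U m Set.univ) ^ 2
        ≤ U (m - t) (solutions sat x) + U m Set.univ := by
      nlinarith [hU0 (m - t) (solutions sat x), hU1 (m - t) (solutions sat x),
        hU0 m Set.univ, hU1 m Set.univ]
    rw [hsplit]
    linarith [add_sq_le (a := exposure sat L m t (solutions sat x))
      (b := U (m - t) (solutions sat x) - U m Set.univ)]
  calc secondMoment sat (exposure sat 1 m) t
      ≤ 𝔼 x : Fin t → C, (2 * exposure sat L m t (solutions sat x) ^ 2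
        + 2 * (U (m - t) (solutions sat x) + U m Set.univ)) :=
        expect_le_expect fun x _ => hpointwise x
    _ = 2 * secondMoment sat (exposure sat L m) t + 4 * U m Set.univ := by
        rw [expect_add_distrib, ← mul_expect, ← mul_expect, expect_add_distrib, hmean,
          Fintype.expect_const, secondMoment]
        ring
    _ ≤ _ := by
        simp only [U]
        linarith [satProb_le_windowProb sat hL m Set.univ]

/-- The two sides bound the variance of the exposure martingale at time `t`. -/
theorem mul_div_pow_le_of_expect_windowInfluence_sq_le {m k t L : ℕ} {v E : ℝ} (hv : 0 < v)
    (hvm : v ≤ satProb sat m Set.univ * (1 - satProb sat m Set.univ)) (hk1 : 1 ≤ k)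
    (hk : 2 * (m * (satProb sat (m - 1) Set.univ - satProb sat m Set.univ) / v) ≤ k)
    (hkt : k ≤ t) (htm : t ≤ m) (hL : 0 < L)
    (hE : ∀ s < t, 𝔼 y : Fin s → C, 𝔼 c,
      windowInfluence sat L (m - (s + 1)) (solutions sat y) c ^ 2 ≤ E) :
    v * ((t : ℝ) / m) ^ k
      ≤ 2 * (t * E) + 4 * (satProb sat m Set.univ - satProb sat (m + L) Set.univ) := by
  have hsum : secondMoment sat (exposure sat L m) t ≤ t * E := by
    refine (secondMoment_exposure_le_sum sat L htm).trans ?_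
    simpa only [card_range, nsmul_eq_mul] using
      sum_le_card_nsmul _ _ E fun s hs => hE s (mem_range.1 hs)
  linarith [mul_div_pow_le_secondMoment_exposure sat hv hvm hk1 hk hkt htm,
    secondMoment_exposure_one_le sat htm hL]

end Exposure

section SmallDrop

/-- Averaging over `R` consecutive values of `m`. -/
theorem exists_small_drops {P : ℕ → ℝ} (hanti : Antitone P) (h0 : ∀ i, 0 ≤ P i) (h1 : ∀ i, P i ≤ 1)
    {R L : ℕ} (m₁ : ℕ) (hR : 0 < R) (hL : 0 < L) :
    ∃ m, m₁ < m ∧ m ≤ m₁ + R ∧ P (m - 1) - P m ≤ 2 / R ∧ P m - P (m + L) ≤ 2 * L / R := by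
  have hR' : (0 : ℝ) < R := by exact_mod_cast hR
  have hL' : (0 : ℝ) < L := by exact_mod_cast hL
  have hsum₁ := sum_sub_shift_le (f := fun i => P (m₁ + i)) (fun i => h0 _) (fun i => h1 _) R 1
  have hsum₂ := sum_sub_shift_le (f := fun i => P (m₁ + i + 1)) (fun i => h0 _) (fun i => h1 _) R L
  have hsum : ∑ i ∈ range R, ((P (m₁ + i) - P (m₁ + (i + 1)))
      + (P (m₁ + i + 1) - P (m₁ + (i + L) + 1)) / L) ≤ ∑ i ∈ range R, (2 / R : ℝ) := by
    rw [sum_add_distrib, ← sum_div, sum_const, card_range, nsmul_eq_mul,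
      mul_div_cancel₀ _ hR'.ne']
    have := div_le_one_of_le₀ (hsum₂.trans_eq (mul_one _)) hL'.le
    push_cast at hsum₁
    linarith
  obtain ⟨i, hi, h⟩ := exists_le_of_sum_le (nonempty_range_iff.2 hR.ne') hsum
  have hdrop₁ : 0 ≤ P (m₁ + i) - P (m₁ + (i + 1)) := sub_nonneg.2 (hanti (by omega))
  have hdrop₂ : 0 ≤ (P (m₁ + i + 1) - P (m₁ + (i + L) + 1)) / L :=
    div_nonneg (sub_nonneg.2 (hanti (by omega))) hL'.le
  refine ⟨m₁ + i + 1, by omega, by have := mem_range.1 hi; omega, ?_, ?_⟩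
  · rw [Nat.add_sub_cancel, add_assoc]; linarith
  · have hle : (P (m₁ + i + 1) - P (m₁ + (i + L) + 1)) / L ≤ 2 / R := by linarith
    rw [div_le_iff₀ hL'] at hle
    rw [show m₁ + i + 1 + L = m₁ + (i + L) + 1 by ring]
    exact hle.trans_eq (div_mul_eq_mul_div ..)

end SmallDrop

/-! ### Variables shared by constraints -/

section Degree

variable {C V ι : Type*} [Fintype ι] [DecidableEq V] (vars : C → Finset V)

/-- The number of constraints of the formula `x` containing the variable `v`, where `vars c` is the
set of variables of the constraint `c`. -/
def degree (x : ι → C) (v : V) : ℕ := #{i | v ∈ vars (x i)}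

theorem degree_comp_perm (π : Equiv.Perm ι) (x : ι → C) (v : V) :
    degree vars (x ∘ π) v = degree vars x v :=
  card_bijective π π.bijective fun i => by simp

theorem iverson_exists_le_sum {α : Type*} [Fintype α] (P : α → Prop) :
    iverson (∃ a, P a) ≤ ∑ a, iverson (P a) := by
  by_cases h : ∃ a, P a
  · obtain ⟨a, ha⟩ := h
    calc iverson (∃ a, P a) ≤ iverson (P a) := iverson_mono fun _ => ha
      _ ≤ ∑ a, iverson (P a) :=
          single_le_sum (f := fun a => iverson (P a)) (fun _ _ => iverson_nonneg _) (mem_univ a)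
  · rw [iverson_of_false h]
    exact sum_nonneg fun _ _ => iverson_nonneg _

theorem exists_subset_image_univ {α : Type*} [DecidableEq α] [Nonempty α] {B : Finset α} {m : ℕ}
    (hB : #B ≤ m) : ∃ z : Fin m → α, B ⊆ univ.image z := by
  obtain ⟨e⟩ : Nonempty (B ↪ Fin m) := Function.Embedding.nonempty_of_card_le (by simpa)
  refine ⟨Function.extend e Subtype.val fun _ => Classical.arbitrary α, fun b hb => ?_⟩
  exact mem_image.2 ⟨e ⟨b, hb⟩, mem_univ _, e.injective.extend_apply ..⟩

variable [Fintype C] [Nonempty C] [DecidableEq ι]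

theorem expect_two_pow_degree_le {p : ℝ} {v : V} (hp : 𝔼 c, iverson (v ∈ vars c) ≤ p) :
    𝔼 x : ι → C, (2 : ℝ) ^ degree vars x v ≤ Real.exp (p * Fintype.card ι) := by
  have hprod (x : ι → C) : (2 : ℝ) ^ degree vars x v = ∏ i, (1 + iverson (v ∈ vars (x i))) := by
    have hfactor (i : ι) :
        1 + iverson (v ∈ vars (x i)) = if v ∈ vars (x i) then (2 : ℝ) else 1 := by
      unfold iverson; split_ifs <;> norm_num
    rw [prod_congr rfl fun i _ => hfactor i, prod_ite, prod_const_one, mul_one, prod_const]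
    rfl
  calc 𝔼 x : ι → C, (2 : ℝ) ^ degree vars x v
      = (1 + 𝔼 c, iverson (v ∈ vars c)) ^ Fintype.card ι := by
        simp_rw [hprod]
        rw [expect_prod_apply fun (_ : ι) c => 1 + iverson (v ∈ vars c), prod_const, card_univ,
          expect_add_distrib, Fintype.expect_const]
    _ ≤ Real.exp p ^ Fintype.card ι := by
        have : 0 ≤ 𝔼 c, iverson (v ∈ vars c) := expect_nonneg fun _ _ => iverson_nonneg _
        gcongr
        linarith [Real.add_one_le_exp p]
    _ = Real.exp (p * Fintype.card ι) := by rw [← Real.exp_nat_mul, mul_comm]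

theorem expect_iverson_lt_degree_le {p : ℝ} {v : V} (hp : 𝔼 c, iverson (v ∈ vars c) ≤ p) (Δ : ℕ) :
    𝔼 x : ι → C, iverson (Δ < degree vars x v)
      ≤ (1 / 2) ^ Δ * Real.exp (p * Fintype.card ι) := by
  have markov (x : ι → C) :
      iverson (Δ < degree vars x v) ≤ (1 / 2) ^ Δ * 2 ^ degree vars x v := by
    by_cases h : Δ < degree vars x v
    · rw [iverson_of_true h, one_div, inv_pow, inv_mul_eq_div, le_div_iff₀ (by positivity),
        one_mul]
      exact pow_le_pow_right₀ one_le_two h.le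
    · rw [iverson_of_false h]; positivity
  refine (expect_le_expect fun x _ => markov x).trans ?_
  rw [← mul_expect]
  gcongr
  exact expect_two_pow_degree_le vars hp

theorem expect_iverson_exists_lt_degree_le [Fintype V] {p : ℝ}
    (hp : ∀ v, 𝔼 c, iverson (v ∈ vars c) ≤ p) (Δ : ℕ) :
    𝔼 x : ι → C, iverson (∃ v, Δ < degree vars x v)
      ≤ Fintype.card V * ((1 / 2) ^ Δ * Real.exp (p * Fintype.card ι)) := by
  calc _ ≤ ∑ v, 𝔼 x : ι → C, iverson (Δ < degree vars x v) := by
        rw [← expect_sum_comm]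
        exact expect_le_expect fun x _ => iverson_exists_le_sum _
    _ ≤ ∑ _v : V, (1 / 2) ^ Δ * Real.exp (p * Fintype.card ι) :=
        sum_le_sum fun v _ => expect_iverson_lt_degree_le vars (hp v) Δ
    _ = _ := by simp

end Degree

section ConnectedSeq

variable {C V ι : Type*} [DecidableEq V] (vars : C → Finset V) {k : ℕ}

/-- The variables occurring in the constraint `c` or in one of the constraints `z`. -/
def reach (c : C) {r : ℕ} (z : Fin r → C) : Finset V :=
  vars c ∪ univ.biUnion fun i => vars (z i)

/-- A sequence of constraints grows the component of `c`: each member shares a variable with `c` or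
with an earlier member. -/
def IsConnectedSeq (c : C) : (r : ℕ) → (Fin r → C) → Prop
  | 0, _ => True
  | r + 1, z => IsConnectedSeq c r (Fin.init z) ∧
      ¬Disjoint (vars (z (Fin.last r))) (reach vars c (Fin.init z))

/-- Some `r` distinct positions of the formula `y` carry a sequence growing the component of `c`. -/
def HasConnectedSubseq (r : ℕ) (y : ι → C) (c : C) : Prop :=
  ∃ e : Fin r ↪ ι, IsConnectedSeq vars c r (y ∘ e)

variable {vars}

theorem card_reach_le (hk : ∀ c, #(vars c) ≤ k) (c : C) {r : ℕ} (z : Fin r → C) :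
    #(reach vars c z) ≤ k * (r + 1) := by
  have hz : #(univ.biUnion fun i => vars (z i)) ≤ #(univ : Finset (Fin r)) * k :=
    card_biUnion_le_card_mul _ _ _ fun i _ => hk (z i)
  rw [card_univ, Fintype.card_fin] at hz
  have := card_union_le (vars c) (univ.biUnion fun i => vars (z i))
  have := hk c
  rw [reach]
  linarith

theorem hasConnectedSubseq_or_exists_closed (hk : ∀ c, #(vars c) ≤ k) (y : ι → C) (c : C) (r : ℕ) :
    HasConnectedSubseq vars r y c ∨ ∃ A : Finset V, #A ≤ k * (r + 1) ∧ vars c ⊆ A ∧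
      ∀ i, vars (y i) ⊆ A ∨ Disjoint (vars (y i)) A := by
  induction r with
  | zero => exact Or.inl ⟨⟨Fin.elim0, fun i => i.elim0⟩, trivial⟩
  | succ r ih =>
    rcases ih with ⟨e, he⟩ | ⟨A, hA, hcA, hyA⟩
    swap
    · exact Or.inr ⟨A, hA.trans (by gcongr; omega), hcA, hyA⟩
    by_cases h : ∀ i, vars (y i) ⊆ reach vars c (y ∘ e) ∨
        Disjoint (vars (y i)) (reach vars c (y ∘ e))
    · exact Or.inr ⟨_, (card_reach_le hk c _).trans (by gcongr; omega), subset_union_left, h⟩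
    push Not at h
    obtain ⟨i, hnew, hmeet⟩ := h
    have hi : i ∉ Set.range e := by
      rintro ⟨a, rfl⟩
      exact hnew ((subset_biUnion_of_mem (fun a => vars ((y ∘ e) a)) (mem_univ a)).trans
        subset_union_right)
    have hinit : Fin.init (y ∘ Fin.snoc (α := fun _ => ι) e i) = y ∘ e := by
      funext a; simp [Fin.init]
    refine Or.inl ⟨⟨Fin.snoc (α := fun _ => ι) e i, Fin.snoc_injective_of_injective e.injective hi⟩,
      ?_⟩
    rw [Function.Embedding.coeFn_mk, IsConnectedSeq, hinit]
    exact ⟨he, by simpa using hmeet⟩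

variable [Fintype ι]

theorem card_filter_not_disjoint_le {x : ι → C} {Δ : ℕ} (hΔ : ∀ v, degree vars x v ≤ Δ)
    (A : Finset V) : #{i | ¬Disjoint (vars (x i)) A} ≤ #A * Δ := by
  classical
  have hsub : ({i | ¬Disjoint (vars (x i)) A} : Finset ι)
      ⊆ A.biUnion fun v => {i | v ∈ vars (x i)} := by
    intro i hi
    obtain ⟨v, hvi, hvA⟩ := not_disjoint_iff.1 (mem_filter.1 hi).2
    exact mem_biUnion.2 ⟨v, hvA, by simpa using hvi⟩
  exact (card_le_card hsub).trans (card_biUnion_le_card_mul _ _ _ fun v _ => hΔ v)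

open Classical in
theorem card_isConnectedSeq_le (hk : ∀ c, #(vars c) ≤ k) (c : C) {x : ι → C} {Δ : ℕ}
    (hΔ : ∀ v, degree vars x v ≤ Δ) {R : ℕ} (r : ℕ) (hr : r ≤ R) :
    #{e : Fin r → ι | IsConnectedSeq vars c r (x ∘ e)} ≤ (k * R * Δ) ^ r := by
  induction r with
  | zero => exact (card_le_univ _).trans (by simp)
  | succ r ih =>
    have hstep (e : Fin r → ι) : #{i | ¬Disjoint (vars (x i)) (reach vars c (x ∘ e))}
        ≤ k * R * Δ := by
      refine (card_filter_not_disjoint_le hΔ _).trans ?_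
      gcongr
      exact (card_reach_le hk c _).trans (by gcongr)
    calc #{e : Fin (r + 1) → ι | IsConnectedSeq vars c (r + 1) (x ∘ e)}
        ≤ #(({e : Fin r → ι | IsConnectedSeq vars c r (x ∘ e)} : Finset _).sigma fun e =>
            {i | ¬Disjoint (vars (x i)) (reach vars c (x ∘ e))}) := by
          refine card_le_card_of_injOn (fun e => ⟨Fin.init e, e (Fin.last r)⟩) ?_ ?_
          · intro e he
            obtain ⟨hinit, hlast⟩ := (mem_filter.1 (mem_coe.1 he)).2
            exact mem_coe.2 (mem_sigma.2
              ⟨mem_filter.2 ⟨mem_univ _, hinit⟩, mem_filter.2 ⟨mem_univ _, hlast⟩⟩)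
          · intro e _ e' _ h
            simp only [Sigma.mk.injEq, heq_eq_eq] at h
            rw [← Fin.snoc_init_self e, ← Fin.snoc_init_self e', h.1, h.2]
      _ ≤ (k * R * Δ) ^ r * (k * R * Δ) := by
          rw [card_sigma]
          refine (sum_le_card_nsmul _ _ _ fun e _ => hstep e).trans ?_
          rw [smul_eq_mul]
          exact Nat.mul_le_mul_right _ (ih (by omega))
      _ = (k * R * Δ) ^ (r + 1) := (pow_succ _ _).symm

theorem sum_iverson_isConnectedSeq_le (hk : ∀ c, #(vars c) ≤ k) (c : C) {x : ι → C} {Δ : ℕ}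
    (hΔ : ∀ v, degree vars x v ≤ Δ) (r : ℕ) :
    ∑ e : Fin r ↪ ι, iverson (IsConnectedSeq vars c r (x ∘ e)) ≤ ((k : ℝ) * r * Δ) ^ r := by
  classical
  let coe : (Fin r ↪ ι) ↪ (Fin r → ι) := ⟨DFunLike.coe, DFunLike.coe_injective⟩
  calc _ = ∑ e ∈ univ.map coe, iverson (IsConnectedSeq vars c r (x ∘ e)) :=
        (sum_map univ coe fun e => iverson (IsConnectedSeq vars c r (x ∘ e))).symm
    _ ≤ ∑ e : Fin r → ι, iverson (IsConnectedSeq vars c r (x ∘ e)) :=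
        sum_le_sum_of_subset_of_nonneg (subset_univ _) fun _ _ _ => iverson_nonneg _
    _ ≤ ((k : ℝ) * r * Δ) ^ r := by
        rw [sum_iverson]
        exact_mod_cast card_isConnectedSeq_le hk c hΔ r le_rfl

end ConnectedSeq

/-! ### Long explorations are rare -/

section Exploration

variable {C V ι κ : Type*} [DecidableEq V] [Fintype C] {vars : C → Finset V} {k : ℕ}
  [Fintype ι] [DecidableEq ι] {W : (ι → C) → ℝ} {Δ : ℕ}

/-- By symmetry all positions contribute equally to a total of at most `(k * r * Δ) ^ r`. -/
theorem expect_mul_isConnectedSeq_le (hk : ∀ c, #(vars c) ≤ k) (h0 : ∀ x, 0 ≤ W x)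
    (hW : ∀ (π : Equiv.Perm ι) x, W (x ∘ π) = W x) (hΔ : ∀ x, W x ≠ 0 → ∀ v, degree vars x v ≤ Δ)
    (c : C) {r : ℕ} (e : Fin r ↪ ι) :
    ((Fintype.card ι + 1 - r : ℕ) : ℝ) ^ r * 𝔼 x, W x * iverson (IsConnectedSeq vars c r (x ∘ e))
      ≤ ((k : ℝ) * r * Δ) ^ r * 𝔼 x, W x := by
  set w := 𝔼 x, W x * iverson (IsConnectedSeq vars c r (x ∘ e)) with hw
  have hw0 : 0 ≤ w := expect_nonneg fun x _ => mul_nonneg (h0 x) (iverson_nonneg _)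
  calc _ ≤ (Fintype.card (Fin r ↪ ι) : ℝ) * w := by
        gcongr
        rw [Fintype.card_embedding_eq, Fintype.card_fin]
        exact_mod_cast Nat.pow_sub_le_descFactorial (Fintype.card ι) r
    _ = ∑ e' : Fin r ↪ ι, 𝔼 x, W x * iverson (IsConnectedSeq vars c r (x ∘ e')) := by
        rw [sum_congr rfl fun e' _ =>
          expect_mul_comp_embedding_eq hW (fun z => iverson (IsConnectedSeq vars c r z)) e' e]
        simp [hw]
    _ = 𝔼 x, W x * ∑ e' : Fin r ↪ ι, iverson (IsConnectedSeq vars c r (x ∘ e')) := by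
        rw [← expect_sum_comm]; simp only [mul_sum]
    _ ≤ 𝔼 x, W x * ((k : ℝ) * r * Δ) ^ r := by
        refine expect_le_expect fun x _ => ?_
        by_cases hx : W x = 0
        · rw [hx, zero_mul, zero_mul]
        · exact mul_le_mul_of_nonneg_left
            (sum_iverson_isConnectedSeq_le hk c (hΔ x hx) r) (h0 x)
    _ = ((k : ℝ) * r * Δ) ^ r * 𝔼 x, W x := by rw [← expect_mul, mul_comm]

variable [Fintype κ] (i₀ : κ ↪ ι)

theorem expect_mul_hasConnectedSubseq_le_of_degree_le (hk : ∀ c, #(vars c) ≤ k)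
    (h0 : ∀ x, 0 ≤ W x) (hW : ∀ (π : Equiv.Perm ι) x, W (x ∘ π) = W x)
    (hΔ : ∀ x, W x ≠ 0 → ∀ v, degree vars x v ≤ Δ) (c : C) (r : ℕ) :
    𝔼 x, W x * iverson (HasConnectedSubseq vars r (x ∘ i₀) c)
      ≤ (Fintype.card κ * (k * r * Δ) / (Fintype.card ι + 1 - r : ℕ)) ^ r * 𝔼 x, W x := by
  have hEW : 0 ≤ 𝔼 x, W x := expect_nonneg fun x _ => h0 x
  classical
  rcases isEmpty_or_nonempty (Fin r ↪ κ) with hempty | ⟨⟨e₀⟩⟩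
  · have hfalse (x : ι → C) : ¬HasConnectedSubseq vars r (x ∘ i₀) c := fun ⟨e, _⟩ => hempty.elim e
    simp only [iverson_of_false (hfalse _), mul_zero, expect_const_zero]
    positivity
  have hr : r ≤ Fintype.card ι := by
    simpa using Fintype.card_le_of_embedding (e₀.trans i₀)
  have hpos : (0 : ℝ) < (Fintype.card ι + 1 - r : ℕ) := by
    exact_mod_cast (by omega : 0 < Fintype.card ι + 1 - r)
  set w := 𝔼 x, W x * iverson (IsConnectedSeq vars c r (x ∘ e₀.trans i₀)) with hw
  have hw0 : 0 ≤ w := expect_nonneg fun x _ => mul_nonneg (h0 x) (iverson_nonneg _)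
  calc _ ≤ 𝔼 x, ∑ e : Fin r ↪ κ, W x * iverson (IsConnectedSeq vars c r (x ∘ e.trans i₀)) := by
        refine expect_le_expect fun x _ => ?_
        rw [← mul_sum]
        exact mul_le_mul_of_nonneg_left (iverson_exists_le_sum _) (h0 x)
    _ = (Fintype.card (Fin r ↪ κ) : ℝ) * w := by
        rw [expect_sum_comm, sum_congr rfl fun e _ =>
          expect_mul_comp_embedding_eq hW (fun z => iverson (IsConnectedSeq vars c r z))
            (e.trans i₀) (e₀.trans i₀)]
        simp [hw]
    _ ≤ (Fintype.card κ : ℝ) ^ r * w := by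
        gcongr
        rw [Fintype.card_embedding_eq, Fintype.card_fin]
        exact_mod_cast Nat.descFactorial_le_pow (Fintype.card κ) r
    _ ≤ _ := by
        rw [div_pow, mul_pow, div_mul_eq_mul_div, le_div_iff₀ (by positivity), mul_assoc, mul_assoc,
          mul_comm w]
        refine mul_le_mul_of_nonneg_left ?_ (by positivity)
        exact expect_mul_isConnectedSeq_le hk h0 hW hΔ c (e₀.trans i₀)

theorem expect_mul_hasConnectedSubseq_le (hk : ∀ c, #(vars c) ≤ k) (h0 : ∀ x, 0 ≤ W x)
    (h1 : ∀ x, W x ≤ 1) (hW : ∀ (π : Equiv.Perm ι) x, W (x ∘ π) = W x) (Δ : ℕ) (c : C) (r : ℕ) :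
    𝔼 x, W x * iverson (HasConnectedSubseq vars r (x ∘ i₀) c)
      ≤ (Fintype.card κ * (k * r * Δ) / (Fintype.card ι + 1 - r : ℕ)) ^ r * 𝔼 x, W x
        + 𝔼 x : ι → C, iverson (∃ v, Δ < degree vars x v) := by
  let F : (ι → C) → ℝ := fun x => W x * iverson (¬∃ v, Δ < degree vars x v)
  have hF0 (x) : 0 ≤ F x := mul_nonneg (h0 x) (iverson_nonneg _)
  have hFW (x) : F x ≤ W x := mul_le_of_le_one_right (h0 x) (iverson_le_one _)
  have hFsymm (π : Equiv.Perm ι) (x) : F (x ∘ π) = F x := by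
    simp only [F, hW, degree_comp_perm]
  have hFΔ (x) (hx : F x ≠ 0) (v) : degree vars x v ≤ Δ := by
    by_contra! hv
    exact hx (mul_eq_zero_of_right _ (iverson_of_false (not_not.2 ⟨v, hv⟩)))
  have htrunc (x : ι → C) : W x * iverson (HasConnectedSubseq vars r (x ∘ i₀) c)
      ≤ F x * iverson (HasConnectedSubseq vars r (x ∘ i₀) c)
        + iverson (∃ v, Δ < degree vars x v) := by
    by_cases hx : ∃ v, Δ < degree vars x v
    · rw [iverson_of_true hx]
      have := mul_nonneg (hF0 x) (iverson_nonneg (HasConnectedSubseq vars r (x ∘ i₀) c))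
      have := mul_le_one₀ (h1 x) (iverson_nonneg (HasConnectedSubseq vars r (x ∘ i₀) c))
        (iverson_le_one _)
      linarith
    · simp only [F, iverson_of_true hx, iverson_of_false hx, mul_one, add_zero, le_refl]
  refine (expect_le_expect fun x _ => htrunc x).trans ?_
  rw [expect_add_distrib]
  gcongr ?_ + _
  refine (expect_mul_hasConnectedSubseq_le_of_degree_le i₀ hk hF0 hFsymm hFΔ c r).trans ?_
  gcongr with x
  exact hFW x

end Exploration

section InfluenceExploration

variable {Ω C V : Type*} [DecidableEq V] [Fintype C] [Nonempty C] [Fintype V] (sat : C → Set Ω)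
  {vars : C → Finset V} {k : ℕ} {p : ℝ}

/-- By symmetry, among the few sequences of `r` constraints connected to `c` only a fraction of
about `(s / (s + j)) ^ r` is exposed early. -/
theorem expect_influence_mul_hasConnectedSubseq_le (hk : ∀ c, #(vars c) ≤ k)
    (hp : ∀ v, 𝔼 c, iverson (v ∈ vars c) ≤ p) (s j r Δ : ℕ) :
    𝔼 y : Fin s → C, 𝔼 c, influence sat j (solutions sat y) c *
        iverson (HasConnectedSubseq vars r y c)
      ≤ (s * (k * r * Δ) / (s + j + 1 - r : ℕ)) ^ r
          * (satProb sat (s + j) Set.univ - satProb sat (s + j + 1) Set.univ)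
        + Fintype.card V * ((1 / 2) ^ Δ * Real.exp (p * (s + j : ℕ))) := by
  set W : C → (Fin s ⊕ Fin j → C) → ℝ := fun c x => influence sat 0 (solutions sat x) c with hW
  have hinfl (y : Fin s → C) (c : C) :
      influence sat j (solutions sat y) c = 𝔼 z : Fin j → C, W c (Sum.elim y z) := by
    simp only [hW, solutions_sumElim]
    exact influence_eq_expect ..
  have hc (c : C) := expect_mul_hasConnectedSubseq_le (vars := vars) (W := W c)
    Function.Embedding.inl hk (fun x => influence_nonneg ..) (fun x => influence_le_one ..)
    (fun π x => by simp only [hW, solutions_comp_equiv]) Δ c r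
  have hdeg := expect_iverson_exists_lt_degree_le (ι := Fin s ⊕ Fin j) vars hp Δ
  simp only [Fintype.card_sum, Fintype.card_fin] at hc hdeg
  rw [← expect_influence_solutions, expect_comm,
    expect_comm univ univ fun y c => influence sat j (solutions sat y) c]
  calc _ = 𝔼 c, 𝔼 x, W c x *
          iverson (HasConnectedSubseq vars r (x ∘ Function.Embedding.inl) c) := by
        refine expect_congr rfl fun c _ => ?_
        rw [expect_sumElim]
        simp only [hinfl, expect_mul]
        rfl
    _ ≤ 𝔼 c, ((s * (k * r * Δ) / (s + j + 1 - r : ℕ)) ^ r * 𝔼 x, W c x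
          + Fintype.card V * ((1 / 2) ^ Δ * Real.exp (p * (s + j : ℕ)))) :=
        expect_le_expect fun c _ => (hc c).trans (by gcongr)
    _ = _ := by
        simp only [expect_add_distrib, ← mul_expect, Fintype.expect_const, hinfl, expect_sumElim]

theorem expect_windowInfluence_mul_hasConnectedSubseq_le (hk : ∀ c, #(vars c) ≤ k) (hp0 : 0 ≤ p)
    (hp : ∀ v, 𝔼 c, iverson (v ∈ vars c) ≤ p) {s j r L : ℕ} (Δ : ℕ) (hL : 0 < L)
    (hr : r ≤ s + j) :
    𝔼 y : Fin s → C, 𝔼 c, windowInfluence sat L j (solutions sat y) c *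
        iverson (HasConnectedSubseq vars r y c)
      ≤ (s * (k * r * Δ) / (s + j + 1 - r : ℕ)) ^ r * (1 / L)
        + Fintype.card V * ((1 / 2) ^ Δ * Real.exp (p * (s + j + L : ℕ))) := by
  set lam : ℝ := (s * (k * r * Δ) / (s + j + 1 - r : ℕ)) ^ r with hlam
  have hterm (l) (hl : l ∈ range L) :
      𝔼 y : Fin s → C, 𝔼 c, influence sat (j + l) (solutions sat y) c *
          iverson (HasConnectedSubseq vars r y c)
        ≤ lam * (satProb sat (s + j + l) Set.univ - satProb sat (s + j + l + 1) Set.univ)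
          + Fintype.card V * ((1 / 2) ^ Δ * Real.exp (p * (s + j + L : ℕ))) := by
    rw [mem_range] at hl
    refine (expect_influence_mul_hasConnectedSubseq_le sat hk hp s (j + l) r Δ).trans ?_
    rw [← add_assoc]
    have hdrop : 0 ≤ satProb sat (s + j + l) Set.univ - satProb sat (s + j + l + 1) Set.univ :=
      sub_nonneg.2 (satProb_antitone sat _ (Nat.le_succ _))
    have hpos : (0 : ℝ) < (s + j + 1 - r : ℕ) := by
      exact_mod_cast (by omega : 0 < s + j + 1 - r)
    have hle : s + j + 1 - r ≤ s + j + l + 1 - r := by omega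
    rw [hlam]
    gcongr
  rw [expect_windowInfluence_mul]
  refine (expect_le_expect hterm).trans ?_
  rw [expect_add_distrib, ← mul_expect, expect_const (by simpa using hL.ne')]
  gcongr
  exact expect_satProb_drop_le sat L (s + j) Set.univ

end InfluenceExploration

end RandomCSP

namespace EC3

open Finset RandomCSP

/-! ### Random EC3 formulas -/

noncomputable instance instFintypeClause (n : ℕ) : Fintype (EC3Clause n) :=
  inferInstanceAs (Fintype {c : Finset (Fin n) // c.card = 3})

/-- The set of assignments satisfying a clause. -/
def sat {n : ℕ} (c : EC3Clause n) : Set (Fin n → Bool) := {σ | ClauseSat σ c.1}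

section Clauses

variable {n : ℕ}

theorem card_clause (n : ℕ) : Fintype.card (EC3Clause n) = n.choose 3 :=
  (Fintype.card_finset_len 3).trans (by rw [Fintype.card_fin])

theorem nonempty_clause (hn : 3 ≤ n) : Nonempty (EC3Clause n) := by
  rw [← Fintype.card_pos_iff, card_clause]
  exact Nat.choose_pos hn

theorem three_le [h : Nonempty (EC3Clause n)] : 3 ≤ n := by
  obtain ⟨c⟩ := h
  simpa only [c.2, Fintype.card_fin] using card_le_univ c.1

instance instNonemptyFin [Nonempty (EC3Clause n)] : Nonempty (Fin n) :=
  ⟨⟨0, zero_lt_three.trans_le three_le⟩⟩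

theorem Psat_eq_satProb (n m : ℕ) : Psat n m = satProb sat m (Set.univ : Set (Fin n → Bool)) := by
  classical
  rw [satProb, expect_iverson, Psat, Nat.card_eq_fintype_card, Nat.card_eq_fintype_card,
    Fintype.card_subtype]
  simp only [Set.univ_inter]
  rfl

theorem Psat_nonneg (n m : ℕ) : 0 ≤ Psat n m := by
  rw [Psat_eq_satProb]
  exact satProb_nonneg _ _ _

theorem Psat_le_one (n m : ℕ) [Nonempty (EC3Clause n)] : Psat n m ≤ 1 := by
  rw [Psat_eq_satProb]
  exact satProb_le_one _ _ _

theorem Psat_antitone (n : ℕ) [Nonempty (EC3Clause n)] : Antitone (Psat n) := fun i j hij => by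
  simpa only [Psat_eq_satProb] using satProb_antitone sat _ hij

theorem clauseSat_congr {σ τ : Fin n → Bool} {c : Finset (Fin n)} (h : ∀ v ∈ c, σ v = τ v) :
    ClauseSat σ c ↔ ClauseSat τ c := by
  unfold ClauseSat
  rw [filter_congr fun v hv => by rw [h v hv]]

theorem exists_eq_of_clauseSat {σ : Fin n → Bool} {c : EC3Clause n} (h : ClauseSat σ c.1)
    (b : Bool) : ∃ v ∈ c.1, σ v = b := by
  by_contra! hb
  rw [ClauseSat, filter_congr (q := fun _ => b = false) fun v hv => by
    cases b <;> simp_all] at h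
  cases b <;> simp [c.2] at h

end Clauses

/-! ### Trading pinned variables for random clauses -/

/-- The set of assignments giving the variable `v` the value `b`. -/
def pin {n : ℕ} (v : Fin n) (b : Bool) : Set (Fin n → Bool) := {σ | σ v = b}

/-- The average, over independent uniform variables `z₁, …, z_k`, of the probability that some
assignment in `S` with `z₁ = a₁, …, z_k = a_k` satisfies `j` independent uniform clauses. -/
noncomputable def pinnedProb {n : ℕ} (j : ℕ) : List Bool → Set (Fin n → Bool) → ℝ
  | [], S => satProb sat j S
  | b :: a, S => 𝔼 y, pinnedProb j a (S ∩ pin y b)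

/-- The probability that pinning independent uniform variables to the values `a` empties `S`. -/
noncomputable def killProb {n : ℕ} (a : List Bool) (S : Set (Fin n → Bool)) : ℝ :=
  1 - pinnedProb 0 a S

section Pinning

variable {n : ℕ}

theorem pinnedProb_nonneg (j : ℕ) (a : List Bool) (S : Set (Fin n → Bool)) :
    0 ≤ pinnedProb j a S := by
  induction a generalizing S with
  | nil => exact satProb_nonneg sat j S
  | cons b a ih => exact expect_nonneg fun y _ => ih _

theorem killProb_le_one (a : List Bool) (S : Set (Fin n → Bool)) : killProb a S ≤ 1 :=
  sub_le_self 1 (pinnedProb_nonneg 0 a S)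

theorem pinnedProb_eq_expect (j : ℕ) (a : List Bool) (S : Set (Fin n → Bool)) :
    pinnedProb j a S = 𝔼 x : Fin j → EC3Clause n, pinnedProb 0 a (S ∩ solutions sat x) := by
  induction a generalizing S with
  | nil => exact (expect_satProb_inter_solutions sat j 0 S).symm
  | cons b a ih =>
    simp only [pinnedProb, ih (S ∩ _)]
    rw [expect_comm]
    simp only [Set.inter_right_comm]

theorem killProb_nil (S : Set (Fin n → Bool)) : killProb [] S = iverson (¬S.Nonempty) := by
  rw [killProb, pinnedProb, satProb_zero]
  by_cases h : S.Nonempty <;> simp [iverson, h]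

theorem pinnedProb_le [Nonempty (Fin n)] (j : ℕ) (a : List Bool) (S : Set (Fin n → Bool)) :
    pinnedProb j a S ≤ satProb sat j S := by
  induction a generalizing S with
  | nil => exact le_rfl
  | cons b a ih =>
    exact expect_le univ_nonempty fun y _ =>
      (ih _).trans (satProb_mono sat j Set.inter_subset_left)

theorem killProb_nonneg [Nonempty (Fin n)] (a : List Bool) (S : Set (Fin n → Bool)) :
    0 ≤ killProb a S :=
  sub_nonneg.2 <| (pinnedProb_le 0 a S).trans <| satProb_zero sat S ▸ iverson_le_one _

theorem killProb_cons [Nonempty (Fin n)] (b : Bool) (a : List Bool) (S : Set (Fin n → Bool)) :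
    killProb (b :: a) S = 𝔼 y, killProb a (S ∩ pin y b) := by
  simp only [killProb, expect_sub_distrib, Fintype.expect_const, pinnedProb]

variable [Nonempty (EC3Clause n)]

/-- If no assignment in `S` gives any variable of `K` the value `b`, then every clause with all its
variables in `K` empties `S`. -/
theorem cube_sub_le_expect_killProb_nil (b : Bool) (S : Set (Fin n → Bool)) :
    (𝔼 y, killProb [] (S ∩ pin y b)) ^ 3 - 3 / n
      ≤ 𝔼 c : EC3Clause n, killProb [] (S ∩ sat c) := by
  classical
  set K : Finset (Fin n) := {y | ¬(S ∩ pin y b).Nonempty}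
  have hKn : #K ≤ n := by simpa using card_le_univ K
  have hclauses : (#K).choose 3 ≤ #{c : EC3Clause n | ¬(S ∩ sat c).Nonempty} := by
    rw [← card_powersetCard]
    refine card_le_card_of_surjOn Subtype.val fun c hc => ?_
    obtain ⟨hcK, hc3⟩ := mem_powersetCard.1 (mem_coe.1 hc)
    refine ⟨⟨c, hc3⟩, mem_coe.2 (mem_filter.2 ⟨mem_univ _, ?_⟩), rfl⟩
    rintro ⟨σ, hS, hσ⟩
    obtain ⟨v, hv, hvb⟩ := exists_eq_of_clauseSat hσ b
    exact (mem_filter.1 (hcK hv)).2 ⟨σ, hS, hvb⟩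
  simp only [killProb_nil, expect_iverson, card_clause, Fintype.card_fin]
  calc ((#K : ℝ) / n) ^ 3 - 3 / n ≤ (#K).choose 3 / n.choose 3 := by
        simpa [Nat.choose] using pow_sub_choose_two_div_le_choose_div_choose hKn three_le
    _ ≤ #{c : EC3Clause n | ¬(S ∩ sat c).Nonempty} / n.choose 3 := by gcongr

theorem cube_sub_le_expect_killProb (b : Bool) (a : List Bool) (S : Set (Fin n → Bool)) :
    (𝔼 y, killProb a (S ∩ pin y b)) ^ 3 - 3 / n ≤ 𝔼 c : EC3Clause n, killProb a (S ∩ sat c) := by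
  induction a generalizing S with
  | nil => exact cube_sub_le_expect_killProb_nil b S
  | cons d a ih =>
    simp only [killProb_cons]
    rw [expect_comm, expect_comm (f := fun (c : EC3Clause n) z => killProb a (S ∩ sat c ∩ pin z d))]
    calc (𝔼 z, 𝔼 y, killProb a (S ∩ pin y b ∩ pin z d)) ^ 3 - 3 / n
        ≤ 𝔼 z, (𝔼 y, killProb a (S ∩ pin y b ∩ pin z d)) ^ 3 - 3 / n := by
          gcongr
          exact expect_pow_le_expect_pow univ_nonempty
            (fun z _ => expect_nonneg fun y _ => killProb_nonneg ..) 3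
      _ = 𝔼 z, ((𝔼 y, killProb a (S ∩ pin z d ∩ pin y b)) ^ 3 - 3 / n) := by
          rw [expect_sub_distrib, Fintype.expect_const]
          simp only [Set.inter_right_comm]
      _ ≤ 𝔼 z, 𝔼 c : EC3Clause n, killProb a (S ∩ pin z d ∩ sat c) :=
          expect_le_expect fun z _ => ih _
      _ = 𝔼 z, 𝔼 c : EC3Clause n, killProb a (S ∩ sat c ∩ pin z d) := by
          simp only [Set.inter_right_comm]

theorem killProb_pow_sub_le (a : List Bool) (S : Set (Fin n → Bool)) :
    killProb a S ^ 3 ^ a.length - 3 ^ (a.length + 1) / n ≤ 1 - satProb sat a.length S := by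
  induction a generalizing S with
  | nil =>
    simp only [List.length_nil, pow_zero, pow_one, killProb, pinnedProb]
    exact sub_le_self _ (by positivity)
  | cons b a ih =>
    set N := 3 ^ a.length with hN
    set δ : ℝ := 3 ^ (a.length + 1) / n with hδ
    set X := 𝔼 c : EC3Clause n, killProb a (S ∩ sat c)
    have hδ0 : 0 ≤ δ := by positivity
    have hclause : killProb (b :: a) S ^ 3 - 3 / n ≤ X :=
      killProb_cons b a S ▸ cube_sub_le_expect_killProb b a S
    have hpow : (killProb (b :: a) S ^ 3) ^ N - δ ≤ X ^ N := by
      refine le_trans (le_of_eq ?_) (pow_sub_mul_le_pow (pow_nonneg (killProb_nonneg ..) 3)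
        (pow_le_one₀ (killProb_nonneg ..) (killProb_le_one ..))
        (expect_nonneg fun c _ => killProb_nonneg ..) (by positivity) hclause N)
      rw [hN, hδ]; push_cast; ring
    calc killProb (b :: a) S ^ 3 ^ (a.length + 1) - 3 ^ (a.length + 1 + 1) / n
        = (killProb (b :: a) S ^ 3) ^ N - δ - 2 * δ := by
          rw [← pow_mul, hN, hδ, pow_succ' 3 a.length, pow_succ _ (a.length + 1)]; ring
      _ ≤ X ^ N - δ := by linarith
      _ ≤ 𝔼 c : EC3Clause n, (killProb a (S ∩ sat c) ^ N - δ) := by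
          rw [expect_sub_distrib, Fintype.expect_const]
          gcongr
          exact expect_pow_le_expect_pow univ_nonempty (fun c _ => killProb_nonneg ..) N
      _ ≤ 𝔼 c : EC3Clause n, (1 - satProb sat a.length (S ∩ sat c)) :=
          expect_le_expect fun c _ => ih _
      _ = 1 - satProb sat (a.length + 1) S := by
          rw [expect_sub_distrib, Fintype.expect_const, satProb_succ]

end Pinning

/-! ### Exchangeable variables -/

/-- The permutation of the clauses induced by a permutation of the variables. -/
def renameClause {n : ℕ} (π : Equiv.Perm (Fin n)) : EC3Clause n ≃ EC3Clause n :=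
  π.finsetCongr.subtypeEquiv fun c => by simp

/-- The set of assignments with prescribed values at listed variables. -/
def pins {n : ℕ} (q : List (Fin n × Bool)) : Set (Fin n → Bool) := {σ | ∀ e ∈ q, σ e.1 = e.2}

/-- The set of assignments `S` is invariant under exchanging any two variables of `U`. -/
def IsExchangeable {n : ℕ} (U : Finset (Fin n)) (S : Set (Fin n → Bool)) : Prop :=
  ∀ x ∈ U, ∀ y ∈ U, ∀ σ, σ ∘ Equiv.swap x y ∈ S ↔ σ ∈ S

section Exchangeable

variable {n : ℕ} {U : Finset (Fin n)} {S : Set (Fin n → Bool)} {v y : Fin n} {b : Bool}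
  {q : List (Fin n × Bool)}

theorem satProb_rename (j : ℕ) (π : Equiv.Perm (Fin n)) (S : Set (Fin n → Bool)) :
    satProb sat j {σ | σ ∘ π ∈ S} = satProb sat j S := by
  refine satProb_preimage sat j (e := (· ∘ π)) π.injective.surjective_comp_right
    (renameClause π) (fun c => Set.ext fun σ => ?_) S
  change #((c.1.map π.toEmbedding).filter fun v => σ v = true) = 1 ↔ ClauseSat (σ ∘ π) c.1
  rw [filter_map, card_map]
  rfl

theorem IsExchangeable.inter_pin (h : IsExchangeable U S) (y : Fin n) (b : Bool) :
    IsExchangeable (U.erase y) (S ∩ pin y b) := by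
  intro x hx z hz σ
  obtain ⟨hxy, hxU⟩ := mem_erase.1 hx
  obtain ⟨hzy, hzU⟩ := mem_erase.1 hz
  simp only [Set.mem_inter_iff, pin, Set.mem_ofPred_eq, Function.comp_apply, h x hxU z hzU σ,
    Equiv.swap_apply_of_ne_of_ne hxy.symm hzy.symm]

theorem IsExchangeable.satProb_inter_pins_cons (h : IsExchangeable U S) (hv : v ∈ U) (hy : y ∈ U)
    (j : ℕ) :
    satProb sat j (S ∩ pins ((v, b) :: q))
      = satProb sat j (S ∩ pin y b ∩ pins (q.map (Prod.map (Equiv.swap v y) id))) := by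
  rw [← satProb_rename j (Equiv.swap v y)]
  congr 1
  ext σ
  simp only [Set.mem_ofPred_eq, Set.mem_inter_iff, pins, pin, List.mem_cons, forall_eq_or_imp,
    List.forall_mem_map, and_assoc, h v hv y hy σ]
  simp

theorem swap_apply_mem_erase (hv : v ∈ U) {w : Fin n} (hw : w ∈ U) (hwv : w ≠ v) :
    Equiv.swap v y w ∈ U.erase y := by
  rcases eq_or_ne w y with rfl | hwy
  · rw [Equiv.swap_apply_right]; exact mem_erase.2 ⟨hwv.symm, hv⟩
  · rw [Equiv.swap_apply_of_ne_of_ne hwv hwy]; exact mem_erase.2 ⟨hwy, hw⟩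

/-- At each step a random variable is, with probability at least `1 / 4`, one of the exchangeable
variables not pinned yet. -/
theorem IsExchangeable.mul_sub_satProb_le_sub_pinnedProb [Nonempty (Fin n)] {j : ℕ} {C : ℝ}
    (h : IsExchangeable U S) (hC : satProb sat j S ≤ C) (hq : (q.map Prod.fst).Nodup)
    (hqU : ∀ e ∈ q, e.1 ∈ U) (hU : n + 4 * q.length ≤ 4 * #U) :
    (1 / 4 : ℝ) ^ q.length * (C - satProb sat j (S ∩ pins q))
      ≤ C - pinnedProb j (q.map Prod.snd) S := by
  induction hk : q.length generalizing q U S with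
  | zero =>
    obtain rfl := List.length_eq_zero_iff.1 hk
    simp [pins, pinnedProb]
  | succ k ih =>
    obtain ⟨⟨v, b⟩, q, rfl⟩ := List.exists_cons_of_length_eq_add_one hk
    simp only [List.map_cons, List.nodup_cons, List.length_cons, List.forall_mem_cons]
      at hq hqU hU hk
    set W := C - satProb sat j (S ∩ pins ((v, b) :: q))
    have hCT (T : Set (Fin n → Bool)) : satProb sat j (S ∩ T) ≤ C :=
      (satProb_mono sat j Set.inter_subset_left).trans hC
    have hpin (y : Fin n) (hy : y ∈ U) :
        (1 / 4) ^ k * W ≤ C - pinnedProb j (q.map Prod.snd) (S ∩ pin y b) := by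
      have hstep := ih (q := q.map (Prod.map (Equiv.swap v y) id)) (h.inter_pin y b) (hCT _)
        ?_ ?_ (by rw [card_erase_of_mem hy, List.length_map]; omega) (by simpa using hk)
      · simpa [W, h.satProb_inter_pins_cons hqU.1 hy, Function.comp_def] using hstep
      · simpa [Function.comp_def] using hq.2.map (Equiv.swap v y).injective
      · simp only [List.forall_mem_map, Prod.map_fst]
        exact fun e he => swap_apply_mem_erase hqU.1 (hqU.2 e he) fun hev =>
          hq.1 (List.mem_map.2 ⟨e, he, hev⟩)
    have hUn : (1 / 4 : ℝ) ≤ #U / n := by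
      have hn : (0 : ℝ) < n := by exact_mod_cast Fin.pos_iff_nonempty.2 inferInstance
      rw [div_le_div_iff₀ (by norm_num) hn]
      exact_mod_cast (by omega : 1 * n ≤ #U * 4)
    calc (1 / 4 : ℝ) ^ (k + 1) * W = 1 / 4 * ((1 / 4) ^ k * W) := by ring
      _ ≤ #U / n * ((1 / 4) ^ k * W) := by
          gcongr
          exact mul_nonneg (by positivity) (sub_nonneg.2 (hCT _))
      _ ≤ 𝔼 y, (C - pinnedProb j (q.map Prod.snd) (S ∩ pin y b)) := by
          have := card_div_card_mul_le_expect
            (fun y => sub_nonneg.2 ((pinnedProb_le ..).trans (hCT (pin y b)))) hpin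
          rwa [Fintype.card_fin] at this
      _ = C - pinnedProb j (b :: q.map Prod.snd) S := by
          rw [expect_sub_distrib, Fintype.expect_const, pinnedProb]

theorem satProb_zero_sub_pinnedProb_pow_le [Nonempty (EC3Clause n)] (a : List Bool)
    (S : Set (Fin n → Bool)) :
    (satProb sat 0 S - pinnedProb 0 a S) ^ 3 ^ a.length
      ≤ satProb sat 0 S - satProb sat a.length S + 3 ^ (a.length + 1) / n := by
  rcases S.eq_empty_or_nonempty with rfl | hS
  · have hzero : pinnedProb 0 a (∅ : Set (Fin n → Bool)) = 0 :=
      le_antisymm ((pinnedProb_le 0 a _).trans (satProb_empty sat 0).le) (pinnedProb_nonneg ..)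
    simp only [satProb_empty, hzero, sub_self, zero_pow (pow_ne_zero a.length three_ne_zero),
      zero_add]
    positivity
  · rw [satProb_zero, iverson_of_true hS]
    exact sub_le_iff_le_add.1 (killProb_pow_sub_le a S)

theorem IsExchangeable.satProb_drop_pow_le [Nonempty (EC3Clause n)] (j : ℕ)
    (h : IsExchangeable U S) (hq : (q.map Prod.fst).Nodup) (hqU : ∀ e ∈ q, e.1 ∈ U)
    (hU : n + 4 * q.length ≤ 4 * #U) :
    ((1 / 4 : ℝ) ^ q.length * (satProb sat j S - satProb sat j (S ∩ pins q))) ^ 3 ^ q.length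
      ≤ satProb sat j S - satProb sat (j + q.length) S + 3 ^ (q.length + 1) / n := by
  set a := q.map Prod.snd
  have hlen : a.length = q.length := List.length_map _
  have hexpect (i : ℕ) :
      satProb sat (j + i) S = 𝔼 x : Fin j → EC3Clause n, satProb sat i (S ∩ solutions sat x) :=
    (expect_satProb_inter_solutions sat j i S).symm
  calc ((1 / 4 : ℝ) ^ q.length * (satProb sat j S - satProb sat j (S ∩ pins q))) ^ 3 ^ q.length
      ≤ (satProb sat j S - pinnedProb j a S) ^ 3 ^ q.length := by
        refine pow_le_pow_left₀ (mul_nonneg (by positivity) (sub_nonneg.2 ?_))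
          (h.mul_sub_satProb_le_sub_pinnedProb le_rfl hq hqU hU) _
        exact satProb_mono sat j Set.inter_subset_left
    _ = (𝔼 x : Fin j → EC3Clause n,
          (satProb sat 0 (S ∩ solutions sat x) - pinnedProb 0 a (S ∩ solutions sat x)))
            ^ 3 ^ q.length := by
        rw [expect_sub_distrib, ← hexpect, ← pinnedProb_eq_expect, add_zero]
    _ ≤ 𝔼 x : Fin j → EC3Clause n,
          (satProb sat 0 (S ∩ solutions sat x) - pinnedProb 0 a (S ∩ solutions sat x))
            ^ 3 ^ q.length :=
        expect_pow_le_expect_pow univ_nonempty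
          (fun x _ => sub_nonneg.2 (pinnedProb_le 0 a _)) _
    _ ≤ 𝔼 x : Fin j → EC3Clause n, (satProb sat 0 (S ∩ solutions sat x)
          - satProb sat q.length (S ∩ solutions sat x) + 3 ^ (q.length + 1) / n) :=
        expect_le_expect fun x _ => hlen ▸ satProb_zero_sub_pinnedProb_pow_le a _
    _ = satProb sat j S - satProb sat (j + q.length) S + 3 ^ (q.length + 1) / n := by
        rw [expect_add_distrib, expect_sub_distrib, Fintype.expect_const, ← hexpect, ← hexpect,
          add_zero]

end Exchangeable

/-! ### Clauses with a small satisfiable neighbourhood have little influence -/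

/-- The clause `c` lies in a union `A` of connected components of the formula `y`, of size at most
`k`, such that `c` and the clauses of `y` inside `A` are simultaneously satisfiable. -/
def HasSatNeighborhood {n s : ℕ} (k : ℕ) (y : Fin s → EC3Clause n) (c : EC3Clause n) : Prop :=
  ∃ (A : Finset (Fin n)) (a : Fin n → Bool), #A ≤ k ∧ c.1 ⊆ A ∧
    (∀ i, (y i).1 ⊆ A ∨ Disjoint (y i).1 A) ∧ ClauseSat a c.1 ∧
    ∀ i, (y i).1 ⊆ A → ClauseSat a (y i).1

/-- The assignments satisfying the clauses of `y` that do not involve the variables `A`. -/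
def solutionsOff {n s : ℕ} (A : Finset (Fin n)) (y : Fin s → EC3Clause n) : Set (Fin n → Bool) :=
  {σ | ∀ i, Disjoint (y i).1 A → ClauseSat σ (y i).1}

open Classical in
/-- The variables occurring in no clause of `y` that avoids the variables `A`. -/
noncomputable def freeVars {n s : ℕ} (A : Finset (Fin n)) (y : Fin s → EC3Clause n) :
    Finset (Fin n) :=
  {v | ∀ i, Disjoint (y i).1 A → v ∉ (y i).1}

section Neighborhood

variable {n s : ℕ} (A : Finset (Fin n)) (y : Fin s → EC3Clause n)

theorem isExchangeable_solutionsOff : IsExchangeable (freeVars A y) (solutionsOff A y) := by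
  intro x hx z hz σ
  refine forall₂_congr fun i hi => clauseSat_congr fun v hv => congrArg σ ?_
  have hne {w : Fin n} (hw : w ∈ freeVars A y) : v ≠ w := by
    rintro rfl
    exact (mem_filter.1 hw).2 i hi hv
  exact Equiv.swap_apply_of_ne_of_ne (hne hx) (hne hz)

theorem subset_freeVars : A ⊆ freeVars A y := fun v hv =>
  mem_filter.2 ⟨mem_univ v, fun _ hi hvi => disjoint_left.1 hi hvi hv⟩

theorem le_card_freeVars_add : n ≤ #(freeVars A y) + s * 3 := by
  classical
  have hcover : (freeVars A y)ᶜ ⊆ univ.biUnion fun i => (y i).1 := fun v hv => by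
    simp only [freeVars, mem_compl, mem_filter, mem_univ, true_and, not_forall, not_not] at hv
    obtain ⟨i, -, hvi⟩ := hv
    exact mem_biUnion.2 ⟨i, mem_univ i, hvi⟩
  have hcard := (card_le_card hcover).trans (card_biUnion_le_card_mul _ _ 3 fun i _ => (y i).2.le)
  rw [card_compl, Fintype.card_fin, card_univ, Fintype.card_fin] at hcard
  omega

variable {A y} {k L : ℕ} {c : EC3Clause n} {a : Fin n → Bool}

/-- Within `solutionsOff A y`, prescribing a solution on `A` is at least as restrictive as imposing
`c` and the remaining clauses of `y`. -/
theorem influence_le_satProb_sub (hc : c.1 ⊆ A) (hA : ∀ i, (y i).1 ⊆ A ∨ Disjoint (y i).1 A)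
    (hac : ClauseSat a c.1) (hay : ∀ i, (y i).1 ⊆ A → ClauseSat a (y i).1) (j : ℕ) :
    influence sat j (solutions sat y) c ≤ satProb sat j (solutionsOff A y)
      - satProb sat j (solutionsOff A y ∩ pins (A.toList.map fun v => (v, a v))) := by
  refine sub_le_sub (satProb_mono sat j fun σ hσ i _ => hσ i) (satProb_mono sat j ?_)
  rintro σ ⟨hσ, hpins⟩
  have hσa {d : EC3Clause n} (hd : d.1 ⊆ A) : ClauseSat σ d.1 ↔ ClauseSat a d.1 :=
    clauseSat_congr fun v hv => hpins (v, a v) (List.mem_map_of_mem (mem_toList.2 (hd hv)))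
  exact ⟨fun i => (hA i).elim (fun hi => (hσa hi).2 (hay i hi)) (hσ i), (hσa hc).2 hac⟩

variable [Nonempty (EC3Clause n)]

theorem windowInfluence_pow_le_of_subset (hL : 0 < L) (j : ℕ) (hs : 12 * s + 4 * #A ≤ 3 * n)
    (hc : c.1 ⊆ A) (hA : ∀ i, (y i).1 ⊆ A ∨ Disjoint (y i).1 A) (hac : ClauseSat a c.1)
    (hay : ∀ i, (y i).1 ⊆ A → ClauseSat a (y i).1) :
    ((1 / 4 : ℝ) ^ #A * windowInfluence sat L j (solutions sat y) c) ^ 3 ^ #A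
      ≤ (#A : ℝ) / L + 3 ^ (#A + 1) / n := by
  set q : List (Fin n × Bool) := A.toList.map fun v => (v, a v)
  have hlen : q.length = #A := by simp [q]
  have hfst : q.map Prod.fst = A.toList := by simp [q, Function.comp_def]
  have hdrop (j : ℕ) := (isExchangeable_solutionsOff A y).satProb_drop_pow_le (q := q) j
    (hfst ▸ nodup_toList A)
    (List.forall_mem_map.2 fun v hv => subset_freeVars A y (mem_toList.1 hv))
    (by have := le_card_freeVars_add A y; omega)
  rw [hlen] at hdrop
  refine windowInfluence_pow_le sat (by positivity) hL (fun j => (hdrop j).trans' ?_) j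
  have := influence_nonneg sat j (solutions sat y) c
  have := influence_le_satProb_sub hc hA hac hay j
  gcongr

theorem HasSatNeighborhood.windowInfluence_pow_le (h : HasSatNeighborhood k y c) (hL : 0 < L)
    (j : ℕ) (hs : 12 * s + 4 * k ≤ 3 * n) :
    ((1 / 4 : ℝ) ^ k * windowInfluence sat L j (solutions sat y) c) ^ 3 ^ k
      ≤ (k : ℝ) / L + 3 ^ (k + 1) / n := by
  obtain ⟨A, a, hAk, hc, hA, hac, hay⟩ := h
  calc ((1 / 4 : ℝ) ^ k * windowInfluence sat L j (solutions sat y) c) ^ 3 ^ k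
      ≤ ((1 / 4 : ℝ) ^ #A * windowInfluence sat L j (solutions sat y) c) ^ 3 ^ #A :=
        mul_pow_pow_anti (windowInfluence_nonneg ..) (windowInfluence_le_one ..) (by norm_num)
          (by norm_num) three_pos hAk
    _ ≤ (#A : ℝ) / L + 3 ^ (#A + 1) / n :=
        windowInfluence_pow_le_of_subset hL j (by omega) hc hA hac hay
    _ ≤ (k : ℝ) / L + 3 ^ (k + 1) / n := by gcongr; norm_num

end Neighborhood

/-! ### Minimal unsatisfiable formulas -/

section Unsatisfiable

variable {n : ℕ}

/-- Simultaneous satisfiability of a finite set of clauses. -/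
def IsSatisfiable (F : Finset (EC3Clause n)) : Prop :=
  ∃ σ : Fin n → Bool, ∀ c ∈ F, ClauseSat σ c.1

/-- The variables occurring in a finite set of clauses. -/
def clauseVars (F : Finset (EC3Clause n)) : Finset (Fin n) := F.biUnion fun c => c.1

open Classical in
/-- The variables occurring in `c` and in no other clause of `F`. -/
noncomputable def privateVars (F : Finset (EC3Clause n)) (c : EC3Clause n) : Finset (Fin n) :=
  {v ∈ c.1 | ∀ d ∈ F, v ∈ d.1 → d = c}

theorem exists_clauseSat_update_update {c : EC3Clause n} {u w : Fin n} (hu : u ∈ c.1)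
    (hw : w ∈ c.1) (huw : u ≠ w) (σ : Fin n → Bool) :
    ∃ b, ClauseSat (Function.update (Function.update σ w false) u b) c.1 := by
  have hwu : w ∈ c.1.erase u := mem_erase.2 ⟨huw.symm, hw⟩
  obtain ⟨x, hx⟩ : ∃ x, (c.1.erase u).erase w = {x} :=
    card_eq_one.1 (by rw [card_erase_of_mem hwu, card_erase_of_mem hu, c.2])
  refine ⟨!σ x, card_eq_one.2 ⟨if σ x then x else u, ?_⟩⟩
  ext v
  have hv := congrArg (v ∈ ·) hx
  have hxv := congrArg (x ∈ ·) hx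
  simp only [mem_erase, mem_singleton, eq_iff_iff] at hv hxv
  simp only [mem_filter, mem_singleton, Function.update_apply]
  grind

variable {F : Finset (EC3Clause n)} (hF : Minimal (fun F => ¬IsSatisfiable F) F)
include hF

/-- Otherwise a solution of the other clauses, changed at two private variables of `c`, would
satisfy `F`. -/
theorem card_privateVars_le_one {c : EC3Clause n} (hc : c ∈ F) : #(privateVars F c) ≤ 1 := by
  classical
  by_contra! hlt
  obtain ⟨u, hu, w, hw, huw⟩ := one_lt_card.1 hlt
  obtain ⟨σ, hσ⟩ := not_not.1 (hF.not_prop_of_lt (erase_ssubset hc))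
  obtain ⟨huc, hu⟩ := mem_filter.1 hu
  obtain ⟨hwc, hw⟩ := mem_filter.1 hw
  obtain ⟨b, hb⟩ := exists_clauseSat_update_update huc hwc huw σ
  refine hF.prop ⟨Function.update (Function.update σ w false) u b, fun d hd => ?_⟩
  obtain rfl | hdc := eq_or_ne d c
  · exact hb
  · refine (clauseSat_congr fun v hv => ?_).2 (hσ d (mem_erase.2 ⟨hdc, hd⟩))
    have hvu : v ≠ u := fun h => hdc (hu d hd (h ▸ hv))
    have hvw : v ≠ w := fun h => hdc (hw d hd (h ▸ hv))
    rw [Function.update_of_ne hvu, Function.update_of_ne hvw]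

/-- Otherwise setting exactly the private variables to true would satisfy `F`. -/
theorem exists_privateVars_eq_empty : ∃ c ∈ F, privateVars F c = ∅ := by
  classical
  by_contra! hne
  refine hF.prop ⟨fun v => decide (∃ d ∈ F, v ∈ privateVars F d), fun c hc => ?_⟩
  suffices h : {v ∈ c.1 | decide (∃ d ∈ F, v ∈ privateVars F d) = true} = privateVars F c by
    rw [ClauseSat, h]
    exact le_antisymm (card_privateVars_le_one hF hc) (card_pos.2 (hne c hc))
  ext v
  simp only [mem_filter, decide_eq_true_eq]
  constructor
  · rintro ⟨hv, d, _, hvd⟩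
    rwa [(mem_filter.1 hvd).2 c hc hv]
  · exact fun hv => ⟨(mem_filter.1 hv).1, c, hc, hv⟩

theorem sum_card_privateVars_lt : ∑ c ∈ F, #(privateVars F c) < #F := by
  obtain ⟨c, hc, hprivate⟩ := exists_privateVars_eq_empty hF
  calc ∑ c ∈ F, #(privateVars F c) < ∑ _c ∈ F, 1 :=
        sum_lt_sum (fun _ hc => card_privateVars_le_one hF hc) ⟨c, hc, by simp [hprivate]⟩
    _ = #F := card_eq_sum_ones F |>.symm

omit hF in
open Classical in
theorem two_le_card_filter_mem_add {v : Fin n} (hv : v ∈ clauseVars F) :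
    2 ≤ #{c ∈ F | v ∈ c.1} + #{c ∈ F | v ∈ privateVars F c} := by
  obtain ⟨c, hc, hvc⟩ := mem_biUnion.1 hv
  have hc' : c ∈ ({c ∈ F | v ∈ c.1} : Finset _) := mem_filter.2 ⟨hc, hvc⟩
  by_cases h : v ∈ privateVars F c
  · have h₁ := card_pos.2 ⟨c, hc'⟩
    have h₂ : 0 < #{c ∈ F | v ∈ privateVars F c} := card_pos.2 ⟨c, mem_filter.2 ⟨hc, h⟩⟩
    omega
  · obtain ⟨d, hd, hvd, hdc⟩ : ∃ d ∈ F, v ∈ d.1 ∧ d ≠ c := by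
      simpa [privateVars, hvc] using h
    exact le_add_right (one_lt_card.2 ⟨d, mem_filter.2 ⟨hd, hvd⟩, c, hc', hdc⟩)

/-- Each variable occurs twice, or once as a private variable, and the private variables are fewer
than the clauses. -/
theorem card_clauseVars_lt_two_mul : #(clauseVars F) < 2 * #F := by
  classical
  have hcount (P : Fin n → EC3Clause n → Prop) [∀ v c, Decidable (P v c)] :
      ∑ v ∈ clauseVars F, #{c ∈ F | P v c} = ∑ c ∈ F, #{v ∈ clauseVars F | P v c} :=
    sum_card_bipartiteAbove_eq_sum_card_bipartiteBelow P
  have hdegree := sum_le_sum fun v (hv : v ∈ clauseVars F) => two_le_card_filter_mem_add hv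
  rw [sum_const, sum_add_distrib, hcount fun v c => v ∈ c.1,
    hcount fun v c => v ∈ privateVars F c, smul_eq_mul] at hdegree
  have hvars : ∑ c ∈ F, #{v ∈ clauseVars F | v ∈ c.1} ≤ #F * 3 :=
    sum_le_card_nsmul _ _ _ fun c _ => (card_le_card fun v hv => (mem_filter.1 hv).2).trans c.2.le
  have hprivate : ∑ c ∈ F, #{v ∈ clauseVars F | v ∈ privateVars F c}
      ≤ ∑ c ∈ F, #(privateVars F c) :=
    sum_le_sum fun c _ => card_le_card fun v hv => (mem_filter.1 hv).2
  have := sum_card_privateVars_lt hF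
  omega

end Unsatisfiable

/-- The clause `c` and some `j` of the clauses of `y` have at most `2 j + 1` variables
altogether. -/
def Tangled {n s : ℕ} (j : ℕ) (y : Fin s → EC3Clause n) (c : EC3Clause n) : Prop :=
  ∃ (W : Finset (Fin s)) (B : Finset (Fin n)),
    #W = j ∧ #B ≤ 2 * j + 1 ∧ c.1 ⊆ B ∧ ∀ i ∈ W, (y i).1 ⊆ B

section Tangled

variable {n s k : ℕ} {y : Fin s → EC3Clause n} {c : EC3Clause n} {A : Finset (Fin n)}

theorem card_le_two_pow {F : Finset (EC3Clause n)} (hF : ∀ d ∈ F, d.1 ⊆ A) : #F ≤ 2 ^ #A := by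
  rw [← card_powerset]
  exact card_le_card_of_injOn Subtype.val (fun d hd => mem_powerset.2 (hF d hd))
    Subtype.val_injective.injOn

theorem tangled_of_minimal {F : Finset (EC3Clause n)}
    (hF : Minimal (fun F => ¬IsSatisfiable F) F) (hc : c ∈ F)
    (hy : ∀ d ∈ F, d ≠ c → d ∈ Set.range y) : Tangled (#F - 1) y c := by
  classical
  obtain ⟨W, -, hinj, himage⟩ := exists_subset_injOn_image_eq_of_surjOn (f := y) Set.univ
    (F.erase c) fun d hd => by
      rw [Set.image_univ]
      exact hy d (mem_of_mem_erase hd) (ne_of_mem_erase hd)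
  have hvars {d : EC3Clause n} (hd : d ∈ F) : d.1 ⊆ clauseVars F :=
    subset_biUnion_of_mem (fun c : EC3Clause n => c.1) hd
  refine ⟨W, clauseVars F, ?_, ?_, hvars hc, fun i hi => hvars ?_⟩
  · rw [← card_image_of_injOn hinj, himage, card_erase_of_mem hc]
  · have := card_clauseVars_lt_two_mul hF
    omega
  · exact mem_of_mem_erase (himage ▸ mem_image_of_mem y hi)

theorem exists_tangled_of_not_clauseSat (hy : (solutions sat y).Nonempty) (hA : #A ≤ k)
    (hc : c.1 ⊆ A)
    (hunsat : ∀ a : Fin n → Bool, ClauseSat a c.1 → ∃ i, (y i).1 ⊆ A ∧ ¬ClauseSat a (y i).1) :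
    ∃ j < 2 ^ k, Tangled j y c := by
  classical
  have hF : ¬IsSatisfiable (insert c (image y {i | (y i).1 ⊆ A})) := by
    rintro ⟨a, ha⟩
    obtain ⟨i, hi, hai⟩ := hunsat a (ha c (mem_insert_self ..))
    exact hai (ha _ (mem_insert_of_mem (mem_image_of_mem y (by simpa using hi))))
  obtain ⟨F, hle, hmin⟩ := exists_minimal_le_of_wellFoundedLT (fun F => ¬IsSatisfiable F) _ hF
  have hmem {d : EC3Clause n} (hd : d ∈ F) : d = c ∨ ∃ i, (y i).1 ⊆ A ∧ y i = d := by
    simpa using hle hd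
  have hcF : c ∈ F := by
    by_contra hcF
    obtain ⟨σ, hσ⟩ := hy
    refine hmin.prop ⟨σ, fun d hd => ?_⟩
    obtain rfl | ⟨i, -, rfl⟩ := hmem hd
    · exact absurd hd hcF
    · exact hσ i
  have hcard : #F ≤ 2 ^ #A := card_le_two_pow fun d hd => by
    obtain rfl | ⟨i, hi, rfl⟩ := hmem hd
    · exact hc
    · exact hi
  refine ⟨#F - 1, ?_, tangled_of_minimal hmin hcF fun d hd hdc =>
    ((hmem hd).resolve_left hdc).imp fun _ => And.right⟩
  calc #F - 1 < #F := Nat.sub_lt (card_pos.2 ⟨c, hcF⟩) one_pos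
    _ ≤ 2 ^ k := hcard.trans (Nat.pow_le_pow_right two_pos hA)

end Tangled

/-! ### Tangled clauses are rare -/

section TangledProbability

variable {n : ℕ}

theorem expect_iverson_subset_le (B : Finset (Fin n)) :
    𝔼 c : EC3Clause n, iverson (c.1 ⊆ B) ≤ ((#B : ℝ) / n) ^ 3 := by
  classical
  have hB : #B ≤ n := by simpa using card_le_univ B
  have hcard : #{c : EC3Clause n | c.1 ⊆ B} ≤ (#B).choose 3 := by
    rw [← card_powersetCard]
    exact card_le_card_of_injOn Subtype.val
      (fun c hc => mem_powersetCard.2 ⟨(mem_filter.1 hc).2, c.2⟩) Subtype.val_injective.injOn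
  refine le_trans ?_ (choose_div_choose_le_pow hB 3)
  rw [expect_iverson, card_clause]
  gcongr

variable [Nonempty (EC3Clause n)]

theorem expect_iverson_mem (v : Fin n) : 𝔼 c : EC3Clause n, iverson (v ∈ c.1) = 3 / n := by
  classical
  have hsymm (w : Fin n) :
      𝔼 c : EC3Clause n, iverson (w ∈ c.1) = 𝔼 c : EC3Clause n, iverson (v ∈ c.1) :=
    Fintype.expect_equiv (renameClause (Equiv.swap v w)) _ _ fun c => congrArg iverson <| by
      change _ = (v ∈ c.1.map (Equiv.swap v w).toEmbedding)
      rw [mem_map_equiv, Equiv.symm_swap, Equiv.swap_apply_left]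
  have hsum : ∑ w : Fin n, 𝔼 c : EC3Clause n, iverson (w ∈ c.1) = 3 := by
    rw [← expect_sum_comm]
    have (c : EC3Clause n) : ∑ w, iverson (w ∈ c.1) = 3 := by
      rw [sum_iverson, filter_univ_mem, c.2, Nat.cast_ofNat]
    simp only [this, Fintype.expect_const]
  rw [sum_congr rfl fun w _ => hsymm w, sum_const, card_univ, Fintype.card_fin,
    nsmul_eq_mul] at hsum
  have : (0 : ℝ) < n := by exact_mod_cast zero_lt_three.trans_le three_le
  rw [eq_div_iff this.ne', mul_comm, hsum]

theorem expect_iverson_forall_mem_subset_le {s m : ℕ} (W : Finset (Fin s)) {B : Finset (Fin n)}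
    (hB : #B ≤ m) :
    𝔼 y : Fin s → EC3Clause n, 𝔼 c : EC3Clause n, iverson (c.1 ⊆ B ∧ ∀ i ∈ W, (y i).1 ⊆ B)
      ≤ ((m : ℝ) / n) ^ (3 * (#W + 1)) := by
  simp only [iverson_and, ← expect_mul, ← mul_expect]
  rw [expect_iverson_forall_mem W fun c : EC3Clause n => c.1 ⊆ B, mul_comm, ← pow_succ, pow_mul]
  have hsubset : 𝔼 c : EC3Clause n, iverson (c.1 ⊆ B) ≤ ((m : ℝ) / n) ^ 3 :=
    (expect_iverson_subset_le B).trans (by gcongr)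
  gcongr
  exact expect_nonneg fun _ _ => iverson_nonneg _

theorem iverson_tangled_le {s : ℕ} (j : ℕ) (y : Fin s → EC3Clause n) (c : EC3Clause n) :
    iverson (Tangled j y c) ≤ ∑ W ∈ powersetCard j univ, ∑ z : Fin (2 * j + 1) → Fin n,
      iverson (c.1 ⊆ univ.image z ∧ ∀ i ∈ W, (y i).1 ⊆ univ.image z) := by
  rw [← sum_coe_sort]
  refine (iverson_mono ?_).trans <|
    (iverson_exists_le_sum fun W : powersetCard j univ => _).trans <|
      sum_le_sum fun W _ => iverson_exists_le_sum _
  rintro ⟨W, B, hW, hB, hc, hy⟩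
  obtain ⟨z, hz⟩ := exists_subset_image_univ hB
  exact ⟨⟨W, mem_powersetCard.2 ⟨subset_univ W, hW⟩⟩, z, hc.trans hz,
    fun i hi => (hy i hi).trans hz⟩

theorem expect_iverson_tangled_le (s j : ℕ) :
    𝔼 y : Fin s → EC3Clause n, 𝔼 c : EC3Clause n, iverson (Tangled j y c)
      ≤ (s : ℝ) ^ j * n ^ (2 * j + 1) * (((2 * j + 1 : ℕ) : ℝ) / n) ^ (3 * (j + 1)) := by
  set β : ℝ := ((2 * j + 1 : ℕ) : ℝ) / n
  calc _ ≤ 𝔼 y : Fin s → EC3Clause n, 𝔼 c : EC3Clause n, ∑ W ∈ powersetCard j univ,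
          ∑ z : Fin (2 * j + 1) → Fin n,
            iverson (c.1 ⊆ univ.image z ∧ ∀ i ∈ W, (y i).1 ⊆ univ.image z) :=
        expect_le_expect fun y _ => expect_le_expect fun c _ => iverson_tangled_le j y c
    _ = ∑ W ∈ powersetCard j univ, ∑ z : Fin (2 * j + 1) → Fin n,
          𝔼 y : Fin s → EC3Clause n, 𝔼 c : EC3Clause n,
            iverson (c.1 ⊆ univ.image z ∧ ∀ i ∈ W, (y i).1 ⊆ univ.image z) := by
        simp only [expect_sum_comm]
    _ ≤ ∑ _W ∈ powersetCard j (univ : Finset (Fin s)), ∑ _z : Fin (2 * j + 1) → Fin n,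
          β ^ (3 * (j + 1)) := by
        refine sum_le_sum fun W hW => sum_le_sum fun z _ => ?_
        have hz : #(univ.image z) ≤ 2 * j + 1 := card_image_le.trans (card_fin _).le
        have h := expect_iverson_forall_mem_subset_le W hz
        rwa [(mem_powersetCard.1 hW).2] at h
    _ = s.choose j * n ^ (2 * j + 1) * β ^ (3 * (j + 1)) := by simp [mul_assoc]
    _ ≤ (s : ℝ) ^ j * n ^ (2 * j + 1) * β ^ (3 * (j + 1)) := by
        gcongr
        exact_mod_cast Nat.choose_le_pow s j

theorem expect_iverson_tangled_le_div_sq {s : ℕ} (hs : s ≤ n) (j : ℕ) :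
    𝔼 y : Fin s → EC3Clause n, 𝔼 c : EC3Clause n, iverson (Tangled j y c)
      ≤ ((2 * j + 1 : ℕ) : ℝ) ^ (3 * (j + 1)) / n ^ 2 := by
  have : (0 : ℝ) < n := by exact_mod_cast zero_lt_three.trans_le three_le
  calc _ ≤ (s : ℝ) ^ j * n ^ (2 * j + 1) * (((2 * j + 1 : ℕ) : ℝ) / n) ^ (3 * (j + 1)) :=
        expect_iverson_tangled_le s j
    _ ≤ (n : ℝ) ^ j * n ^ (2 * j + 1) * (((2 * j + 1 : ℕ) : ℝ) / n) ^ (3 * (j + 1)) := by gcongr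
    _ = _ := by
        rw [div_pow, ← pow_add, show 3 * (j + 1) = j + (2 * j + 1) + 2 by ring, pow_add (n : ℝ) _ 2]
        field_simp

end TangledProbability

/-! ### The mean squared influence of a random clause -/

section MeanSquare

variable {n s L r : ℕ}

theorem hasConnectedSubseq_or_hasSatNeighborhood_or_tangled {y : Fin s → EC3Clause n}
    (hy : (solutions sat y).Nonempty) (c : EC3Clause n) (r : ℕ) :
    HasConnectedSubseq Subtype.val r y c ∨ HasSatNeighborhood (3 * (r + 1)) y c ∨
      ∃ i < 2 ^ (3 * (r + 1)), Tangled i y c := by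
  rcases hasConnectedSubseq_or_exists_closed (fun c : EC3Clause n => c.2.le) y c r
    with hlong | ⟨A, hA, hc, hclosed⟩
  · exact .inl hlong
  by_cases hsat : ∃ a, ClauseSat a c.1 ∧ ∀ i, (y i).1 ⊆ A → ClauseSat a (y i).1
  · obtain ⟨a, hac, hay⟩ := hsat
    exact .inr (.inl ⟨A, a, hA, hc, hclosed, hac, hay⟩)
  · push Not at hsat
    exact .inr (.inr (exists_tangled_of_not_clauseSat hy hA hc hsat))

variable [Nonempty (EC3Clause n)] {ε : ℝ}

theorem HasSatNeighborhood.windowInfluence_le {k : ℕ} {y : Fin s → EC3Clause n} {c : EC3Clause n}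
    (h : HasSatNeighborhood k y c) (hL : 0 < L) (j : ℕ) (hε : 0 ≤ ε) (hs : 12 * s + 4 * k ≤ 3 * n)
    (hbig : (k : ℝ) / L + 3 ^ (k + 1) / n < ((1 / 4 : ℝ) ^ k * ε) ^ 3 ^ k) :
    windowInfluence sat L j (solutions sat y) c ≤ ε := by
  have hpow := (h.windowInfluence_pow_le hL j hs).trans_lt hbig
  have hlt := lt_of_pow_lt_pow_left₀ _ (by positivity) hpow
  exact (lt_of_mul_lt_mul_left hlt (by positivity)).le

theorem windowInfluence_sq_le (hL : 0 < L) (j : ℕ) (y : Fin s → EC3Clause n) (c : EC3Clause n)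
    (hε : 0 ≤ ε) (hs : 12 * s + 4 * (3 * (r + 1)) ≤ 3 * n)
    (hbig : ((3 * (r + 1) : ℕ) : ℝ) / L + 3 ^ (3 * (r + 1) + 1) / n
      < ((1 / 4 : ℝ) ^ (3 * (r + 1)) * ε) ^ 3 ^ (3 * (r + 1))) :
    windowInfluence sat L j (solutions sat y) c ^ 2
      ≤ ε * windowInfluence sat L j (solutions sat y) c
        + windowInfluence sat L j (solutions sat y) c
          * iverson (HasConnectedSubseq Subtype.val r y c)
        + ∑ i ∈ range (2 ^ (3 * (r + 1))), iverson (Tangled i y c) := by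
  set Q := windowInfluence sat L j (solutions sat y) c with hQ
  have hQ0 : 0 ≤ Q := windowInfluence_nonneg ..
  have hQ1 : Q ≤ 1 := windowInfluence_le_one ..
  have hsmall : 0 ≤ ε * Q := mul_nonneg hε hQ0
  have hlong : 0 ≤ Q * iverson (HasConnectedSubseq Subtype.val r y c) :=
    mul_nonneg hQ0 (iverson_nonneg _)
  have htangled : 0 ≤ ∑ i ∈ range (2 ^ (3 * (r + 1))), iverson (Tangled i y c) :=
    sum_nonneg fun _ _ => iverson_nonneg _
  rcases (solutions sat y).eq_empty_or_nonempty with hy | hy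
  · rw [hQ, hy, windowInfluence_empty] at *
    linarith
  rcases hasConnectedSubseq_or_hasSatNeighborhood_or_tangled hy c r with h | h | ⟨i, hi, h⟩
  · rw [iverson_of_true h]
    nlinarith
  · nlinarith [h.windowInfluence_le hL j hε hs hbig]
  · have : 1 ≤ ∑ i ∈ range (2 ^ (3 * (r + 1))), iverson (Tangled i y c) := by
      rw [← iverson_of_true h]
      exact single_le_sum (f := fun i => iverson (Tangled i y c)) (fun _ _ => iverson_nonneg _)
        (mem_range.2 hi)
    nlinarith

theorem expect_windowInfluence_sq_le (hL : 0 < L) (j Δ : ℕ) (hε : 0 ≤ ε) (hr : r ≤ s + j)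
    (hs : 12 * s + 4 * (3 * (r + 1)) ≤ 3 * n)
    (hbig : ((3 * (r + 1) : ℕ) : ℝ) / L + 3 ^ (3 * (r + 1) + 1) / n
      < ((1 / 4 : ℝ) ^ (3 * (r + 1)) * ε) ^ 3 ^ (3 * (r + 1))) :
    𝔼 y : Fin s → EC3Clause n, 𝔼 c, windowInfluence sat L j (solutions sat y) c ^ 2
      ≤ ε / L + (s * (3 * r * Δ) / (s + j + 1 - r : ℕ)) ^ r * (1 / L)
        + n * ((1 / 2) ^ Δ * Real.exp (3 / n * (s + j + L : ℕ)))
        + (∑ i ∈ range (2 ^ (3 * (r + 1))), ((2 * i + 1 : ℕ) : ℝ) ^ (3 * (i + 1))) / n ^ 2 := by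
  have hlong := expect_windowInfluence_mul_hasConnectedSubseq_le (vars := Subtype.val) sat
    (fun c : EC3Clause n => c.2.le) (by positivity) (fun v => (expect_iverson_mem v).le) Δ hL hr
  rw [Fintype.card_fin, Nat.cast_ofNat] at hlong
  calc _ ≤ 𝔼 y : Fin s → EC3Clause n, 𝔼 c,
        (ε * windowInfluence sat L j (solutions sat y) c
          + windowInfluence sat L j (solutions sat y) c
            * iverson (HasConnectedSubseq Subtype.val r y c)
          + ∑ i ∈ range (2 ^ (3 * (r + 1))), iverson (Tangled i y c)) :=
        expect_le_expect fun y _ => expect_le_expect fun c _ =>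
          windowInfluence_sq_le hL j y c hε hs hbig
    _ = ε * 𝔼 y : Fin s → EC3Clause n, 𝔼 c, windowInfluence sat L j (solutions sat y) c
        + 𝔼 y : Fin s → EC3Clause n, 𝔼 c, windowInfluence sat L j (solutions sat y) c
            * iverson (HasConnectedSubseq Subtype.val r y c)
        + ∑ i ∈ range (2 ^ (3 * (r + 1))),
            𝔼 y : Fin s → EC3Clause n, 𝔼 c, iverson (Tangled i y c) := by
        simp only [expect_add_distrib, ← mul_expect, expect_sum_comm]
    _ ≤ ε * (1 / L) + ((s * (3 * r * Δ) / (s + j + 1 - r : ℕ)) ^ r * (1 / L)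
          + n * ((1 / 2) ^ Δ * Real.exp (3 / n * (s + j + L : ℕ))))
        + ∑ i ∈ range (2 ^ (3 * (r + 1))), ((2 * i + 1 : ℕ) : ℝ) ^ (3 * (i + 1)) / n ^ 2 := by
        gcongr with i
        · exact expect_windowInfluence_solutions_le sat L j
        · exact hlong
        · exact expect_iverson_tangled_le_div_sq (by omega) i
    _ = _ := by rw [sum_div]; ring

end MeanSquare

/-! ### Choice of the scales -/

section Scales

variable {n s m L b q w : ℕ} {ρ r : ℝ}

theorem le_two_mul_mul_div {a : ℕ} (ha : 0 < a) (h : a ≤ n) : n ≤ 2 * (a * (n / a)) := by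
  have hdiv := Nat.div_add_mod n a
  have hmod := Nat.mod_lt n ha
  have := Nat.le_mul_of_pos_right a (Nat.div_pos h ha)
  omega

theorem one_div_le_two_mul_pow_div (hn : 0 < n) (hL : 0 < L) (hnL : n ≤ 2 * (b ^ q * L)) :
    1 / (L : ℝ) ≤ 2 * b ^ q / n := by
  rw [div_le_div_iff₀ (by exact_mod_cast hL) (by exact_mod_cast hn), one_mul, mul_assoc]
  exact_mod_cast hnL

theorem neighborhood_error_lt {κ : ℕ} (hb : 0 < b) (hL : 0 < L)
    (hκ : 2 * κ + 3 ^ (κ + 1) < ((1 / 4 : ℝ) ^ κ) ^ 3 ^ κ * b)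
    (hbn : b ^ (q + w * 3 ^ κ + 1) ≤ n) (hnL : n ≤ 2 * (b ^ q * L)) :
    (κ : ℝ) / L + 3 ^ (κ + 1) / n < ((1 / 4 : ℝ) ^ κ * (1 / b ^ w)) ^ 3 ^ κ := by
  have hn : 0 < n := (pow_pos hb _).trans_le hbn
  have hbn' : (b : ℝ) ^ (q + w * 3 ^ κ + 1) ≤ n := by exact_mod_cast hbn
  have hinv : 1 / (L : ℝ) ≤ 2 * b ^ q / n := one_div_le_two_mul_pow_div hn hL hnL
  have hone : 1 ≤ (b : ℝ) ^ q := one_le_pow₀ (by exact_mod_cast hb)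
  calc (κ : ℝ) / L + 3 ^ (κ + 1) / n = κ * (1 / (L : ℝ)) + 3 ^ (κ + 1) * (1 / n) := by ring
    _ ≤ κ * (2 * b ^ q / n) + 3 ^ (κ + 1) * (b ^ q / n) := by gcongr
    _ = (2 * κ + 3 ^ (κ + 1)) * (b ^ q / n) := by ring
    _ < ((1 / 4 : ℝ) ^ κ) ^ 3 ^ κ * b * (b ^ q / n) := by gcongr
    _ ≤ ((1 / 4 : ℝ) ^ κ) ^ 3 ^ κ * b * (b ^ q / b ^ (q + w * 3 ^ κ + 1)) := by gcongr
    _ = ((1 / 4 : ℝ) ^ κ * (1 / b ^ w)) ^ 3 ^ κ := by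
        rw [mul_pow, div_pow 1 ((b : ℝ) ^ w), one_pow, ← pow_mul (b : ℝ) w, pow_succ, pow_add]
        field_simp

theorem connected_error_le (hρ : 0 < ρ) (hb : 0 < b) (hL : 0 < L) (hn : 0 < n)
    (hnL : n ≤ 2 * (b ^ q * L)) (hs : s * b ^ 2 ≤ n) (hw : 2 * w ≤ m) (hm : ρ * n ≤ m) :
    (s * (3 * w * b) / (m - w : ℕ) : ℝ) ^ w * (1 / L)
      ≤ 2 * (6 * w / ρ) ^ w * (b ^ q / (b ^ w * n)) := by
  have hinv : 1 / (L : ℝ) ≤ 2 * b ^ q / n := one_div_le_two_mul_pow_div hn hL hnL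
  have hs' : (s : ℝ) ≤ n / b ^ 2 := by
    rw [le_div_iff₀ (by positivity)]
    exact_mod_cast hs
  have hmw : ρ * n / 2 ≤ (m - w : ℕ) := by
    have : (m : ℝ) ≤ 2 * (m - w : ℕ) := by exact_mod_cast (by omega : m ≤ 2 * (m - w))
    linarith
  have hbase : (s * (3 * w * b) / (m - w : ℕ) : ℝ) ≤ 6 * w / ρ / b :=
    calc (s * (3 * w * b) / (m - w : ℕ) : ℝ) ≤ n / b ^ 2 * (3 * w * b) / (ρ * n / 2) := by gcongr
      _ = 6 * w / ρ / b := by field_simp; ring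
  calc (s * (3 * w * b) / (m - w : ℕ) : ℝ) ^ w * (1 / L)
      ≤ (6 * w / ρ / b) ^ w * (2 * b ^ q / n) := by gcongr
    _ = 2 * (6 * w / ρ) ^ w * (b ^ q / (b ^ w * n)) := by rw [div_pow _ (b : ℝ)]; field_simp

theorem degree_error_le {N : ℕ} (hb : 0 < b) (hn : 0 < n) (hN : N ≤ r * n)
    (hsmall : (n : ℝ) ^ 2 * b ^ w * (1 / 2) ^ b ≤ 1) :
    n * ((1 / 2) ^ b * Real.exp (3 / n * N)) ≤ Real.exp (3 * r) * (b ^ q / (b ^ w * n)) := by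
  have hexp : 3 / n * N ≤ 3 * r := by
    rw [div_mul_eq_mul_div, div_le_iff₀ (by exact_mod_cast hn)]
    linarith
  calc n * ((1 / 2) ^ b * Real.exp (3 / n * N)) ≤ n * ((1 / 2) ^ b * Real.exp (3 * r)) := by gcongr
    _ = Real.exp (3 * r) * ((n : ℝ) ^ 2 * b ^ w * (1 / 2) ^ b / (b ^ w * n)) := by field_simp
    _ ≤ Real.exp (3 * r) * (b ^ q / (b ^ w * n)) := by
        gcongr
        exact hsmall.trans (one_le_pow₀ (by exact_mod_cast hb))

theorem div_sq_le_mul_div {C : ℝ} (hC : 0 ≤ C) (hb : 0 < b) (hbn : b ^ w ≤ n) :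
    C / (n : ℝ) ^ 2 ≤ C * (b ^ q / (b ^ w * n)) := by
  have hn0 : (0 : ℝ) < n := by exact_mod_cast (pow_pos hb _).trans_le hbn
  calc C / (n : ℝ) ^ 2 = C * (1 / (n * n)) := by ring
    _ ≤ C * (b ^ q / (b ^ w * n)) := by
        gcongr
        · exact one_le_pow₀ (by exact_mod_cast hb)
        · exact_mod_cast hbn

/-- At scale `b`, degrees are cut off at `b`, connected sequences are followed for `w` steps, and
influences below `b ^ (-w)` are neglected. -/
theorem expect_windowInfluence_sq_le_mul [Nonempty (EC3Clause n)] (hρ : 0 < ρ)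
    (hwb : 8 * (w + 1) ≤ b) (hρb : 2 * w ≤ ρ * b)
    (hκ : 2 * (3 * (w + 1) : ℕ) + 3 ^ (3 * (w + 1) + 1)
      < ((1 / 4 : ℝ) ^ (3 * (w + 1))) ^ 3 ^ (3 * (w + 1)) * b)
    (hbn : b ^ (q + w * 3 ^ (3 * (w + 1)) + 1) ≤ n)
    (hsmall : (n : ℝ) ^ 2 * b ^ w * (1 / 2) ^ b ≤ 1) (hL : 0 < L) (hnL : n ≤ 2 * (b ^ q * L))
    (hs : s * b ^ 2 ≤ n) (hsm : s < m) (hm : ρ * n ≤ m) (hmL : (m + L : ℕ) ≤ r * n) :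
    𝔼 y : Fin s → EC3Clause n, 𝔼 c,
        windowInfluence sat L (m - (s + 1)) (solutions sat y) c ^ 2
      ≤ (2 + 2 * (6 * w / ρ) ^ w + Real.exp (3 * r)
          + ∑ i ∈ range (2 ^ (3 * (w + 1))), ((2 * i + 1 : ℕ) : ℝ) ^ (3 * (i + 1)))
        * (b ^ q / (b ^ w * n)) := by
  have hb : 0 < b := by omega
  have hn : 0 < n := (pow_pos hb _).trans_le hbn
  have hb_le : b ≤ n := (Nat.le_self_pow (by omega) b).trans hbn
  have hbw : b ^ w ≤ n := by
    refine (Nat.pow_le_pow_right hb ?_).trans hbn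
    have := Nat.le_mul_of_pos_right w (pow_pos three_pos (3 * (w + 1)))
    omega
  have hwm : 2 * w ≤ m := by
    have : ρ * b ≤ ρ * n := by gcongr
    exact_mod_cast hρb.trans (this.trans hm)
  have hsn : 12 * s + 4 * (3 * (w + 1)) ≤ 3 * n := by
    have : s * 4 ^ 2 ≤ n := le_trans (by gcongr; omega) hs
    omega
  have hinv : 1 / (L : ℝ) ≤ 2 * b ^ q / n := one_div_le_two_mul_pow_div hn hL hnL
  have hN : (s + (m - (s + 1)) + L : ℕ) ≤ r * n :=
    le_trans (by exact_mod_cast (by omega : s + (m - (s + 1)) + L ≤ m + L)) hmL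
  have hneglected : (1 / b ^ w : ℝ) / L ≤ 2 * (b ^ q / (b ^ w * n)) :=
    calc (1 / b ^ w : ℝ) / L = 1 / b ^ w * (1 / L) := by ring
      _ ≤ 1 / b ^ w * (2 * b ^ q / n) := by gcongr
      _ = 2 * (b ^ q / (b ^ w * n)) := by ring
  refine (expect_windowInfluence_sq_le hL _ b (by positivity) (by omega) hsn
    (neighborhood_error_lt hb hL hκ hbn hnL)).trans ?_
  rw [show s + (m - (s + 1)) + 1 - w = m - w by omega, add_mul, add_mul, add_mul]
  exact add_le_add (add_le_add (add_le_add hneglected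
    (connected_error_le hρ hb hL hn hnL hs hwm hm)) (degree_error_le hb hn hN hsmall))
    (div_sq_le_mul_div (by positivity) hb hbw)

end Scales

section Asymptotics

/-- `b` is the integer part of the `K`-th root of `n`. -/
theorem eventually_exists_root {K : ℕ} (hK : K ≠ 0) {Q : ℕ → Prop} (hQ : ∀ᶠ b in atTop, Q b) :
    ∀ᶠ n : ℕ in atTop, ∃ b, Q b ∧ b ^ K ≤ n ∧ n ≤ (2 * b) ^ K := by
  obtain ⟨B, hB⟩ := eventually_atTop.1 hQ
  filter_upwards [eventually_ge_atTop ((B + 1) ^ K)] with n hn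
  have hroot : B + 1 ≤ Nat.nthRoot K n := (Nat.le_nthRoot_iff hK).2 hn
  refine ⟨Nat.nthRoot K n, hB _ (by omega), (Nat.le_nthRoot_iff hK).1 le_rfl, ?_⟩
  exact (Nat.lt_pow_nthRoot_add_one hK n).le.trans (Nat.pow_le_pow_left (by omega) K)

theorem eventually_two_mul_pow_mul_pow_mul_half_pow_le_one (a c : ℕ) :
    ∀ᶠ b : ℕ in atTop, (2 * (b : ℝ)) ^ a * b ^ c * (1 / 2) ^ b ≤ 1 := by
  have h := (tendsto_pow_const_mul_const_pow_of_lt_one (a + c) (r := (1 / 2 : ℝ)) (by norm_num)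
    (by norm_num)).const_mul ((2 : ℝ) ^ a)
  rw [mul_zero] at h
  filter_upwards [h.eventually_le_const zero_lt_one] with b hb
  calc (2 * (b : ℝ)) ^ a * b ^ c * (1 / 2) ^ b = 2 ^ a * (b ^ (a + c) * (1 / 2) ^ b) := by ring
    _ ≤ 1 := hb

theorem eventually_exists_scale {K : ℕ} (hK : K ≠ 0) (w : ℕ) {Q : ℕ → Prop}
    (hQ : ∀ᶠ b in atTop, Q b) :
    ∀ᶠ n : ℕ in atTop, ∃ b, Q b ∧ b ^ K ≤ n ∧ (n : ℝ) ^ 2 * b ^ w * (1 / 2) ^ b ≤ 1 := by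
  filter_upwards [eventually_exists_root hK
    (hQ.and (eventually_two_mul_pow_mul_pow_mul_half_pow_le_one (K * 2) w))]
    with n ⟨b, ⟨hb, hsmall⟩, hbn, hnb⟩
  refine ⟨b, hb, hbn, le_trans ?_ hsmall⟩
  rw [pow_mul]
  gcongr
  exact_mod_cast hnb

theorem eventually_expect_windowInfluence_sq_le {ρ : ℝ} (hρ : 0 < ρ) (r : ℝ) (q w : ℕ) :
    ∃ M : ℝ, 0 ≤ M ∧ ∀ᶠ b : ℕ in atTop, ∀ {n s m L : ℕ} [Nonempty (EC3Clause n)],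
      b ^ (q + w * 3 ^ (3 * (w + 1)) + 1) ≤ n → (n : ℝ) ^ 2 * b ^ w * (1 / 2) ^ b ≤ 1 →
      0 < L → n ≤ 2 * (b ^ q * L) → s * b ^ 2 ≤ n → s < m → ρ * n ≤ m → (m + L : ℕ) ≤ r * n →
      𝔼 y : Fin s → EC3Clause n, 𝔼 c,
        windowInfluence sat L (m - (s + 1)) (solutions sat y) c ^ 2
          ≤ M * (b ^ q / (b ^ w * n)) := by
  have hcast : Tendsto (Nat.cast : ℕ → ℝ) atTop atTop := tendsto_natCast_atTop_atTop
  refine ⟨2 + 2 * (6 * w / ρ) ^ w + Real.exp (3 * r)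
    + ∑ i ∈ range (2 ^ (3 * (w + 1))), ((2 * i + 1 : ℕ) : ℝ) ^ (3 * (i + 1)), by positivity, ?_⟩
  filter_upwards [eventually_ge_atTop (8 * (w + 1)), hcast.eventually_ge_atTop (2 * w / ρ),
    hcast.eventually_gt_atTop ((2 * (3 * (w + 1) : ℕ) + 3 ^ (3 * (w + 1) + 1)) /
      ((1 / 4 : ℝ) ^ (3 * (w + 1))) ^ 3 ^ (3 * (w + 1)))] with b hwb hρb hκ
  intro n s m L _ hbn hsmall hL hnL hs hsm hm hmL
  rw [div_le_iff₀' hρ] at hρb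
  rw [div_lt_iff₀' (by positivity)] at hκ
  exact expect_windowInfluence_sq_le_mul hρ hwb hρb hκ hbn hsmall hL hnL hs hsm hm hmL

/-- With `t ≈ n / b ^ 2` exposed constraints, the lower bound for the variance is of order
`b ^ (-2 * k)`; the choices `q = 2 * k + 1` and `w = 4 * k` make every term of the upper bound of
order `b ^ (-q)`. -/
theorem mul_scale_le_of_sandwich {k : ℕ} {n t m L b v r M D : ℝ} (hn : 0 < n) (hb : 0 < b)
    (hm : 0 < m) (hr : 0 < r) (hv : 0 ≤ v) (hM : 0 ≤ M) (hD : 0 ≤ D) (hmr : m ≤ r * n)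
    (hnt : n ≤ 2 * (b ^ 2 * t)) (htn : t * b ^ 2 ≤ n) (hLn : L * b ^ (2 * k + 1) ≤ n)
    (h : v * (t / m) ^ k
      ≤ 2 * (t * (M * (b ^ (2 * k + 1) / (b ^ (4 * k) * n)))) + 4 * (D * L / n)) :
    v * b ≤ (2 * M + 4 * D) * (2 * r) ^ k := by
  have ht : t ≤ n / b ^ 2 := (le_div_iff₀ (by positivity)).2 htn
  have hL : L ≤ n / b ^ (2 * k + 1) := (le_div_iff₀ (by positivity)).2 hLn
  have htm : 1 / (2 * r * b ^ 2) ≤ t / m := by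
    rw [div_le_div_iff₀ (by positivity) hm]
    nlinarith
  have hkey : v / ((2 * r) ^ k * b ^ (2 * k)) ≤ (2 * M + 4 * D) / b ^ (2 * k + 1) :=
    calc v / ((2 * r) ^ k * b ^ (2 * k)) = v * (1 / (2 * r * b ^ 2)) ^ k := by
          rw [div_pow, one_pow, mul_pow (2 * r), ← pow_mul, mul_one_div]
      _ ≤ v * (t / m) ^ k := by gcongr
      _ ≤ 2 * (n / b ^ 2 * (M * (b ^ (2 * k + 1) / (b ^ (4 * k) * n))))
          + 4 * (D * (n / b ^ (2 * k + 1)) / n) := h.trans (by gcongr)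
      _ = (2 * M + 4 * D) / b ^ (2 * k + 1) := by
          field_simp
          ring
  rw [div_le_div_iff₀ (by positivity) (by positivity), pow_succ] at hkey
  refine le_of_mul_le_mul_right ?_ (by positivity : 0 < b ^ (2 * k))
  linarith

theorem div_sq_le_of_mul_le {n m b : ℕ} {ρ : ℝ} (hρ : 0 < ρ) (hρb : 1 / ρ ≤ b)
    (hm : ρ * n ≤ m) : n / b ^ 2 ≤ m := by
  have hb : 1 ≤ (b : ℝ) := by
    have : 0 < (b : ℝ) := (one_div_pos.2 hρ).trans_le hρb
    exact_mod_cast this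
  have hone : 1 ≤ ρ * (b : ℝ) ^ 2 :=
    ((div_le_iff₀' hρ).1 hρb).trans (by gcongr; exact le_self_pow₀ hb two_ne_zero)
  have hdiv : ((n / b ^ 2 : ℕ) : ℝ) * b ^ 2 ≤ n := by exact_mod_cast Nat.div_mul_le_self n (b ^ 2)
  suffices ((n / b ^ 2 : ℕ) : ℝ) ≤ m by exact_mod_cast this
  calc ((n / b ^ 2 : ℕ) : ℝ) ≤ (n / b ^ 2 : ℕ) * (ρ * b ^ 2) :=
        le_mul_of_one_le_right (Nat.cast_nonneg _) hone
    _ = ρ * ((n / b ^ 2 : ℕ) * b ^ 2) := by ring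
    _ ≤ ρ * n := by gcongr
    _ ≤ m := hm

theorem mul_scale_le_of_expect_windowInfluence_sq_le {n m k b : ℕ} {ρ r v M D : ℝ} (hn : 3 ≤ n)
    (hρ : 0 < ρ) (hr : 0 < r) (hv : 0 < v) (hM : 0 ≤ M) (hD : 0 ≤ D) (hk1 : 1 ≤ k)
    (hk : 2 * r * D / v ≤ k) (hkb : k ≤ b) (hρb : 1 / ρ ≤ b) (hbn : b ^ (2 * k + 1) ≤ n)
    (hm : ρ * n ≤ m) (hmr : m ≤ r * n) (hvm : v ≤ Psat n m * (1 - Psat n m))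
    (hdrop : n * (Psat n (m - 1) - Psat n m) ≤ D)
    (hdropL : n * (Psat n m - Psat n (m + n / b ^ (2 * k + 1))) ≤ D * (n / b ^ (2 * k + 1) : ℕ))
    (hE : ∀ s < n / b ^ 2, 𝔼 y : Fin s → EC3Clause n, 𝔼 c,
        windowInfluence sat (n / b ^ (2 * k + 1)) (m - (s + 1)) (solutions sat y) c ^ 2
          ≤ M * (b ^ (2 * k + 1) / (b ^ (4 * k) * n))) :
    v * b ≤ (2 * M + 4 * D) * (2 * r) ^ k := by
  have := nonempty_clause hn
  have hb : 0 < b := hk1.trans hkb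
  have hn0 : (0 : ℝ) < n := by exact_mod_cast three_pos.trans_le hn
  have hb3 : b * b ^ 2 ≤ n :=
    (by ring : b * b ^ 2 = b ^ 3) ▸ (Nat.pow_le_pow_right hb (by omega)).trans hbn
  have hb2 : b ^ 2 ≤ n := (Nat.le_mul_of_pos_left _ hb).trans hb3
  have hL : 0 < n / b ^ (2 * k + 1) := Nat.div_pos hbn (pow_pos hb _)
  have htn : ((n / b ^ 2 : ℕ) : ℝ) * b ^ 2 ≤ n := by exact_mod_cast Nat.div_mul_le_self n (b ^ 2)
  have hm0 : (0 : ℝ) < m := (mul_pos hρ hn0).trans_le hm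
  have hkd : 2 * (m * (Psat n (m - 1) - Psat n m) / v) ≤ k := by
    refine le_trans ?_ hk
    rw [mul_assoc, mul_div_assoc 2]
    suffices m * (Psat n (m - 1) - Psat n m) ≤ r * D by gcongr
    calc m * (Psat n (m - 1) - Psat n m) ≤ r * n * (Psat n (m - 1) - Psat n m) := by
          gcongr
          exact sub_nonneg.2 (Psat_antitone n (m.sub_le 1))
      _ ≤ r * D := by rw [mul_assoc]; gcongr
  simp only [Psat_eq_satProb] at hvm hdrop hdropL hkd
  have hsandwich := mul_div_pow_le_of_expect_windowInfluence_sq_le sat hv hvm hk1 hkd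
    (hkb.trans ((Nat.le_div_iff_mul_le (pow_pos hb 2)).2 hb3))
    (div_sq_le_of_mul_le hρ hρb hm) hL hE
  have hdropL' := (le_div_iff₀' hn0).2 hdropL
  have hLn : ((n / b ^ (2 * k + 1) : ℕ) : ℝ) * b ^ (2 * k + 1) ≤ n := by
    exact_mod_cast Nat.div_mul_le_self n (b ^ (2 * k + 1))
  exact mul_scale_le_of_sandwich hn0 (by exact_mod_cast hb) hm0 hr hv.le hM hD hmr
    (by exact_mod_cast le_two_mul_mul_div (pow_pos hb 2) hb2) htn hLn
    (hsandwich.trans (by gcongr))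

theorem eventually_Psat_mul_one_sub_lt {ρ r v D : ℝ} (hρ : 0 < ρ) (hr : 0 < r) (hv : 0 < v)
    (hD : 0 ≤ D) :
    ∀ᶠ n : ℕ in atTop, ∃ L, 0 < L ∧ ∀ m : ℕ, ρ * n ≤ m → m ≤ r * n →
      n * (Psat n (m - 1) - Psat n m) ≤ D → n * (Psat n m - Psat n (m + L)) ≤ D * L →
      Psat n m * (1 - Psat n m) < v := by
  have hcast : Tendsto (Nat.cast : ℕ → ℝ) atTop atTop := tendsto_natCast_atTop_atTop
  obtain ⟨k, hk1, hk⟩ : ∃ k : ℕ, 1 ≤ k ∧ 2 * r * D / v ≤ k :=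
    ((eventually_ge_atTop 1).and (hcast.eventually_ge_atTop _)).exists
  obtain ⟨M, hM, hE⟩ := eventually_expect_windowInfluence_sq_le hρ (r + 1) (2 * k + 1) (4 * k)
  filter_upwards [eventually_ge_atTop 3, eventually_exists_scale
    (K := 2 * k + 1 + 4 * k * 3 ^ (3 * (4 * k + 1)) + 1) (Nat.succ_ne_zero _) (4 * k) <| hE.and <|
    (eventually_ge_atTop k).and <| (hcast.eventually_ge_atTop (1 / ρ)).and <|
    hcast.eventually_gt_atTop ((2 * M + 4 * D) * (2 * r) ^ k / v)]
    with n hn ⟨b, ⟨hE, hkb, hρb, hvb⟩, hbn, hsmall⟩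
  have := nonempty_clause hn
  have hb : 0 < b := hk1.trans hkb
  have hbq : b ^ (2 * k + 1) ≤ n := (Nat.pow_le_pow_right hb (by omega)).trans hbn
  have hL : 0 < n / b ^ (2 * k + 1) := Nat.div_pos hbq (pow_pos hb _)
  refine ⟨_, hL, fun m hm hmr hdrop hdropL => not_le.1 fun hvm => ?_⟩
  rw [div_lt_iff₀' hv] at hvb
  refine hvb.not_ge (mul_scale_le_of_expect_windowInfluence_sq_le hn hρ hr hv hM hD hk1 hk hkb hρb
    hbq hm hmr hvm hdrop hdropL fun s hs => ?_)
  have hs' : s * b ^ 2 ≤ n := (Nat.le_div_iff_mul_le (pow_pos hb 2)).1 hs.le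
  refine hE hbn hsmall hL (le_two_mul_mul_div (pow_pos hb _) hbq) hs' ?_ hm ?_
  · exact hs.trans_le (div_sq_le_of_mul_le hρ hρb hm)
  · push_cast
    have : ((n / b ^ (2 * k + 1) : ℕ) : ℝ) ≤ n := by exact_mod_cast Nat.div_le_self _ _
    linarith

theorem eventually_le_Psat_of_le_Psat {r r' α δ : ℝ} (hr' : 0 < r') (hr'r : r' < r) (hα : 0 < α)
    (hδ : 0 < δ) :
    ∀ᶠ n : ℕ in atTop, α ≤ Psat n ⌊r * (n : ℝ)⌋₊ → 1 - δ ≤ Psat n ⌊r' * (n : ℝ)⌋₊ := by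
  obtain ⟨η, hη, rfl⟩ : ∃ η, 0 < η ∧ r = r' + η := ⟨r - r', by linarith, by ring⟩
  have hcast : Tendsto (Nat.cast : ℕ → ℝ) atTop atTop := tendsto_natCast_atTop_atTop
  filter_upwards [eventually_ge_atTop 3, hcast.eventually_ge_atTop (1 / η),
    eventually_Psat_mul_one_sub_lt hr' (hr'.trans hr'r) (mul_pos hα hδ)
      (by positivity : 0 ≤ 4 / η)] with n hn hηn ⟨L, hL, hcontra⟩ hPα
  have := nonempty_clause hn
  have hR : η * n / 2 < ⌊η * n⌋₊ := Nat.div_two_lt_floor ((div_le_iff₀' hη).1 hηn)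
  have hR0 : 0 < ⌊η * n⌋₊ := by exact_mod_cast (by positivity : 0 < η * n / 2).trans hR
  obtain ⟨m, hm, hmR, hdrop, hdropL⟩ := exists_small_drops (Psat_antitone n) (Psat_nonneg n)
    (fun i => Psat_le_one n i) ⌊r' * n⌋₊ hR0 hL
  have hmr : (m : ℝ) ≤ (r' + η) * n :=
    calc (m : ℝ) ≤ ⌊r' * n⌋₊ + ⌊η * n⌋₊ := by exact_mod_cast hmR
      _ ≤ r' * n + η * n := by gcongr <;> exact Nat.floor_le (by positivity)
      _ = (r' + η) * n := by ring
  have hRn : n * (2 / (⌊η * n⌋₊ : ℝ)) ≤ 4 / η :=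
    calc n * (2 / (⌊η * n⌋₊ : ℝ)) ≤ n * (2 / (η * n / 2)) := by gcongr
      _ = 4 / η := by field_simp; norm_num
  have hlt := hcontra m ((Nat.lt_of_floor_lt hm).le) hmr
    (le_trans (by gcongr) hRn) <|
    calc n * (Psat n m - Psat n (m + L)) ≤ n * (2 * L / ⌊η * n⌋₊) := by gcongr
      _ = n * (2 / ⌊η * n⌋₊) * L := by ring
      _ ≤ 4 / η * L := by gcongr
  by_contra! hPδ
  have hPmα : α ≤ Psat n m := hPα.trans (Psat_antitone n (Nat.le_floor hmr))
  have hPmδ : δ ≤ 1 - Psat n m := by linarith [Psat_antitone n hm.le]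
  exact hlt.not_ge (mul_le_mul hPmα hPmδ hδ.le (Psat_nonneg n m))

end Asymptotics

end EC3

theorem ec3_nonuniform_threshold_boost_general (r : ℝ)
    (hliminf : 0 < liminf (fun n : ℕ => Psat n ⌊r * (n : ℝ)⌋₊) atTop)
    (r' : ℝ) (hr' : 0 < r') (hr'r : r' < r) :
    Tendsto (fun n : ℕ => Psat n ⌊r' * (n : ℝ)⌋₊) atTop (𝓝 1) := by
  obtain ⟨α, hα, hlt⟩ := exists_between hliminf
  have hbdd : IsBoundedUnder (· ≥ ·) atTop fun n : ℕ => Psat n ⌊r * (n : ℝ)⌋₊ :=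
    isBoundedUnder_of ⟨0, fun n => EC3.Psat_nonneg n _⟩
  refine tendsto_order.2 ⟨fun a ha => ?_, fun a ha => ?_⟩
  · filter_upwards [eventually_lt_of_lt_liminf hlt hbdd,
      EC3.eventually_le_Psat_of_le_Psat hr' hr'r hα (half_pos (sub_pos.2 ha))] with n hαn hboost
    linarith [hboost hαn.le]
  · filter_upwards [eventually_ge_atTop 3] with n hn
    have := EC3.nonempty_clause hn
    exact (EC3.Psat_le_one n _).trans_lt ha

/-- Given a non-uniform threshold function `r*(n)` in the sense of Friedgut:
for every `ε > 0`, densities `ρ` with `ρ ≤ (1-ε) r*(n)` for all large `n` are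
satisfiable w.h.p., and densities with `ρ ≥ (1+ε) r*(n)` for all large `n` are
unsatisfiable w.h.p.  If the satisfiability probability at some fixed density
`r > 0` has positive liminf, then at every fixed density `r' < r` the
satisfiability probability tends to 1. -/
theorem ec3_nonuniform_threshold_boost (rstar : ℕ → ℝ) (hpos : ∀ n, 0 < rstar n)
    (hbelow : ∀ ε : ℝ, 0 < ε → ∀ ρ : ℝ,
      (∀ᶠ n : ℕ in atTop, ρ ≤ (1 - ε) * rstar n) →
      Tendsto (fun n : ℕ => Psat n ⌊ρ * (n : ℝ)⌋₊) atTop (𝓝 1))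
    (habove : ∀ ε : ℝ, 0 < ε → ∀ ρ : ℝ,
      (∀ᶠ n : ℕ in atTop, (1 + ε) * rstar n ≤ ρ) →
      Tendsto (fun n : ℕ => Psat n ⌊ρ * (n : ℝ)⌋₊) atTop (𝓝 0))
    (r : ℝ) (hr : 0 < r)
    (hliminf : 0 < Filter.liminf (fun n : ℕ => Psat n ⌊r * (n : ℝ)⌋₊) atTop)
    (r' : ℝ) (hr' : 0 < r') (hr'r : r' < r) :
    Tendsto (fun n : ℕ => Psat n ⌊r' * (n : ℝ)⌋₊) atTop (𝓝 1) :=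
  ec3_nonuniform_threshold_boost_general r hliminf r' hr' hr'r
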